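/- arXiv:2208.07083 — 4 statements merged into one kernel-verified Lean document; each statement's English description precedes it below -/
import Mathlib

section
/- Let F : I × I → I be bisymmetric, partially strictly increasing, and reflexive. Suppose A, B ⊆ I are equivalence classes of the relation a ∼ b ⟺ F(a,b) = F(b,a), and every element of A is strictly smaller than every element of B. Then for all a ∈ A and b ∈ B: a < F(a,b) < b; more precisely F(a,b) lies strictly between the classes A and B (every element of A is smaller than every element of F(A,B) and every element of F(A,B) is smaller than every element of B). -/
/-!
Two facts carry the proof.

* `apply_not_comm`: if `a ≁ b`, then `F a b ≁ a` and `F a b ≁ b`, by bisymmetry and cancellation.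
  Hence `F a b` lies neither in `A` nor in `B`.
* `SymPair.comm`: if `α < β` and `F α β = F β α`, then `F` is symmetric on the whole of `[α, β]`.
  Hence the classes are convex, and `a < F a b` forces `F a b` to lie above all of `A`: otherwise
  `F a b` would be enclosed between two elements of `A`.

For the second fact, iterating `F` from `α` and `β` yields points `grid n m`, standing for the dyadic
numbers `m / 2 ^ n`, with `F (grid n i) (grid n j) = grid (n + 1) (i + j)`. Every point of `[α, β]`
then has a level in `[0, 1]`, every level is attained, and the level of `F x z` is the mean of the
levels of `x` and `z`. In particular `F x z` and `F z x` have the same level, and it remains to see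
that a level determines its point. If `x < y` both had level `t`, then for every `s ∈ [0, 1]`, with
`z` a point of level `s`, the nonempty open interval `(F x z, F y z)` would lie at level
`(t + s) / 2`. These intervals are pairwise disjoint and uncountably many, which is impossible in `ℝ`.
-/

/-- A reflexive, bisymmetric, partially strictly increasing operation on `[α, β]`, with `α < β`,
whose endpoints commute. -/
structure SymPair (F : ℝ → ℝ → ℝ) (α β : ℝ) : Prop where
  lt : α < β
  map : ∀ x ∈ Set.Icc α β, ∀ y ∈ Set.Icc α β, F x y ∈ Set.Icc α β
  refl : ∀ x ∈ Set.Icc α β, F x x = x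
  inc1 : ∀ y ∈ Set.Icc α β, StrictMonoOn (fun x => F x y) (Set.Icc α β)
  inc2 : ∀ x ∈ Set.Icc α β, StrictMonoOn (fun y => F x y) (Set.Icc α β)
  bisym : ∀ x ∈ Set.Icc α β, ∀ y ∈ Set.Icc α β, ∀ u ∈ Set.Icc α β, ∀ v ∈ Set.Icc α β,
    F (F x y) (F u v) = F (F x u) (F y v)
  sym : F α β = F β α

/-- The point of `[α, β]` standing for the dyadic number `m / 2 ^ n`, obtained by iterating `F` from
`α` (for `0`) and `β` (for `1`). For even `m` the recursion gives `F x x = x`, the point of the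
previous generation. For reflexive `F` the value is `β` for all `m ≥ 2 ^ n`. -/
noncomputable def grid (F : ℝ → ℝ → ℝ) (α β : ℝ) : ℕ → ℕ → ℝ
  | 0, m => if m = 0 then α else β
  | n + 1, m => F (grid F α β n (m / 2)) (grid F α β n ((m + 1) / 2))

/-- `z` has level `s` up to an error of `c` grid steps in each generation. The tolerance `c` makes
levels easy to average, and as `c` does not depend on the generation, `s` is still determined
by `z`. -/
def Level (F : ℝ → ℝ → ℝ) (α β : ℝ) (c : ℝ) (z s : ℝ) : Prop :=
  ∀ n m : ℕ, m ≤ 2 ^ n →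
    ((m : ℝ) + c < s * 2 ^ n → grid F α β n m ≤ z) ∧
    (s * 2 ^ n + c < (m : ℝ) → z ≤ grid F α β n m)

namespace SymPair

variable {F : ℝ → ℝ → ℝ} {α β : ℝ}

lemma le_apply (h : SymPair F α β) {x y u v : ℝ} (hx : x ∈ Set.Icc α β) (hy : y ∈ Set.Icc α β)
    (hu : u ∈ Set.Icc α β) (hv : v ∈ Set.Icc α β) (hxu : x ≤ u) (hyv : y ≤ v) :
    F x y ≤ F u v :=
  ((h.inc1 y hy).monotoneOn hx hu hxu).trans ((h.inc2 u hu).monotoneOn hy hv hyv)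

lemma grid_mem (h : SymPair F α β) (n m : ℕ) : grid F α β n m ∈ Set.Icc α β := by
  induction n generalizing m with
  | zero =>
    have := h.lt.le
    unfold grid
    split_ifs <;> simp [this]
  | succ n ih => exact h.map _ (ih _) _ (ih _)

lemma grid_even (h : SymPair F α β) (n k : ℕ) :
    grid F α β (n + 1) (2 * k) = grid F α β n k := by
  have h1 : 2 * k / 2 = k := by omega
  have h2 : (2 * k + 1) / 2 = k := by omega
  rw [grid, h1, h2, h.refl _ (h.grid_mem n k)]

lemma grid_odd (n k : ℕ) :
    grid F α β (n + 1) (2 * k + 1) = F (grid F α β n k) (grid F α β n (k + 1)) := by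
  have h1 : (2 * k + 1) / 2 = k := by omega
  have h2 : (2 * k + 1 + 1) / 2 = k + 1 := by omega
  rw [grid, h1, h2]

lemma grid_refine (h : SymPair F α β) (n k m : ℕ) :
    grid F α β (n + k) (m * 2 ^ k) = grid F α β n m := by
  induction k with
  | zero => simp
  | succ k ih =>
    have : m * 2 ^ (k + 1) = 2 * (m * 2 ^ k) := by ring
    rw [this, ← add_assoc, h.grid_even, ih]

lemma grid_zero (h : SymPair F α β) (n : ℕ) : grid F α β n 0 = α := by
  simpa [grid] using h.grid_refine 0 n 0

lemma grid_top (h : SymPair F α β) (n : ℕ) : grid F α β n (2 ^ n) = β := by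
  simpa [grid] using h.grid_refine 0 n 1

lemma grid_lt_succ (h : SymPair F α β) (n m : ℕ) (hm : m + 1 ≤ 2 ^ n) :
    grid F α β n m < grid F α β n (m + 1) := by
  induction n generalizing m with
  | zero =>
    have : m = 0 := by simpa using hm
    subst this
    simpa [grid] using h.lt
  | succ n ih =>
    rw [pow_succ] at hm
    obtain ⟨k, rfl | rfl⟩ := Nat.even_or_odd' m
    · have hk := ih k (by omega)
      calc grid F α β (n + 1) (2 * k) = F (grid F α β n k) (grid F α β n k) := by
            rw [h.grid_even, h.refl _ (h.grid_mem n k)]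
        _ < F (grid F α β n k) (grid F α β n (k + 1)) :=
            h.inc2 _ (h.grid_mem _ _) (h.grid_mem _ _) (h.grid_mem _ _) hk
        _ = _ := (grid_odd n k).symm
    · have hk := ih k (by omega)
      calc grid F α β (n + 1) (2 * k + 1) = F (grid F α β n k) (grid F α β n (k + 1)) :=
            grid_odd n k
        _ < F (grid F α β n (k + 1)) (grid F α β n (k + 1)) :=
            h.inc1 _ (h.grid_mem _ _) (h.grid_mem _ _) (h.grid_mem _ _) hk
        _ = grid F α β (n + 1) (2 * (k + 1)) := by
            rw [h.grid_even, h.refl _ (h.grid_mem n _)]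
        _ = _ := by ring_nf

lemma grid_mono (h : SymPair F α β) (n : ℕ) {i j : ℕ} (hij : i ≤ j) (hj : j ≤ 2 ^ n) :
    grid F α β n i ≤ grid F α β n j := by
  induction j, hij using Nat.le_induction with
  | base => exact le_rfl
  | succ j _ ih => exact (ih (by omega)).trans (h.grid_lt_succ n j hj).le

/-- The order of grid points of different generations is that of the dyadic numbers they stand
for. -/
lemma grid_cross (h : SymPair F α β) {n m n' m' : ℕ} (hm' : m' ≤ 2 ^ n')
    (hle : (m : ℝ) / 2 ^ n ≤ (m' : ℝ) / 2 ^ n') : grid F α β n m ≤ grid F α β n' m' := by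
  rw [← h.grid_refine n n' m, ← h.grid_refine n' n m', add_comm n' n]
  apply h.grid_mono
  · rw [div_le_div_iff₀ (by positivity) (by positivity)] at hle
    exact_mod_cast hle
  · rw [pow_add, mul_comm (2 ^ n)]
    exact Nat.mul_le_mul_right _ hm'

/-- `F` acts on grid points as the arithmetic mean. Commutation of `α` and `β` enters only in
generation `0`; later generations inherit it from the symmetry of `i + j`. -/
lemma grid_apply (h : SymPair F α β) (n i j : ℕ) (hi : i ≤ 2 ^ n) (hj : j ≤ 2 ^ n) :
    F (grid F α β n i) (grid F α β n j) = grid F α β (n + 1) (i + j) := by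
  induction n generalizing i j with
  | zero =>
    have hα : F α α = α := h.refl _ ⟨le_rfl, h.lt.le⟩
    have hβ : F β β = β := h.refl _ ⟨h.lt.le, le_rfl⟩
    have hs := h.sym
    simp only [pow_zero] at hi hj
    interval_cases i <;> interval_cases j <;> simp [grid, hs]
  | succ n ih =>
    rw [pow_succ] at hi hj
    have M := h.grid_mem n
    obtain ⟨k, rfl | rfl⟩ := Nat.even_or_odd' i <;> obtain ⟨l, rfl | rfl⟩ := Nat.even_or_odd' j
    · rw [h.grid_even, h.grid_even, ih _ _ (by omega) (by omega), ← mul_add, h.grid_even]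
    · rw [h.grid_even, grid_odd]
      conv_lhs => rw [← h.refl _ (M k)]
      rw [h.bisym _ (M _) _ (M _) _ (M _) _ (M _), ih _ _ (by omega) (by omega),
        ih _ _ (by omega) (by omega), ← add_assoc, ← add_assoc, ← mul_add, grid_odd]
    · rw [h.grid_even, grid_odd]
      conv_lhs => rw [← h.refl _ (M l)]
      rw [h.bisym _ (M _) _ (M _) _ (M _) _ (M _), ih _ _ (by omega) (by omega),
        ih _ _ (by omega) (by omega)]
      have e1 : 2 * k + 1 + 2 * l = 2 * (k + l) + 1 := by ring
      have e2 : k + 1 + l = k + l + 1 := by ring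
      rw [e1, e2, grid_odd]
    · rw [grid_odd, grid_odd]
      -- Swapping the second pair makes both means produced by bisymmetry equal.
      rw [ih l (l + 1) (by omega) (by omega), add_comm l (l + 1),
        ← ih (l + 1) l (by omega) (by omega),
        h.bisym _ (M _) _ (M _) _ (M _) _ (M _), ih _ _ (by omega) (by omega),
        ih _ _ (by omega) (by omega)]
      have e1 : 2 * k + 1 + (2 * l + 1) = 2 * (k + l + 1) := by ring
      have e2 : k + 1 + l = k + l + 1 := by ring
      rw [e1, e2, ← add_assoc, h.refl _ (h.grid_mem _ _), h.grid_even]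

/-- Every level in `[0, 1]` is attained, by completeness of `ℝ`. -/
lemma exists_point (h : SymPair F α β) {s : ℝ} (hs : s ∈ Set.Icc (0 : ℝ) 1) :
    ∃ z ∈ Set.Icc α β, Level F α β 0 z s := by
  set S : Set ℝ := {w | ∃ n m : ℕ, m ≤ 2 ^ n ∧ (m : ℝ) / 2 ^ n ≤ s ∧ w = grid F α β n m} with hS
  have hα : α ∈ S := ⟨0, 0, by simp, by simpa using hs.1, by simp [grid]⟩
  have hβ : ∀ w ∈ S, w ≤ β := by
    rintro w ⟨n, m, -, -, rfl⟩
    exact (h.grid_mem n m).2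
  have hbdd : BddAbove S := ⟨β, hβ⟩
  refine ⟨sSup S, ⟨le_csSup hbdd hα, csSup_le ⟨α, hα⟩ hβ⟩, fun n m hm => ⟨fun hlt => ?_, fun hlt => ?_⟩⟩
  · refine le_csSup hbdd ⟨n, m, hm, ?_, rfl⟩
    rw [div_le_iff₀ (by positivity)]
    linarith
  · refine csSup_le ⟨α, hα⟩ ?_
    rintro w ⟨n', m', -, hle, rfl⟩
    refine h.grid_cross hm (hle.trans ?_)
    rw [le_div_iff₀ (by positivity)]
    linarith

lemma exists_level (h : SymPair F α β) {z : ℝ} (hz : z ∈ Set.Icc α β) :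
    ∃ s ∈ Set.Icc (0 : ℝ) 1, Level F α β 0 z s := by
  set S : Set ℝ := {w | ∃ n m : ℕ, m ≤ 2 ^ n ∧ grid F α β n m ≤ z ∧ w = (m : ℝ) / 2 ^ n} with hS
  have h0 : (0 : ℝ) ∈ S := ⟨0, 0, by simp, by simpa [grid] using hz.1, by simp⟩
  have h1 : ∀ w ∈ S, w ≤ 1 := by
    rintro w ⟨n, m, hm, -, rfl⟩
    rw [div_le_one (by positivity)]
    exact_mod_cast hm
  have hbdd : BddAbove S := ⟨1, h1⟩
  refine ⟨sSup S, ⟨le_csSup hbdd h0, csSup_le ⟨0, h0⟩ h1⟩, fun n m hm => ⟨fun hlt => ?_, fun hlt => ?_⟩⟩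
  · have hlt' : (m : ℝ) / 2 ^ n < sSup S := by
      rw [div_lt_iff₀ (by positivity)]
      linarith
    obtain ⟨w, ⟨n', m', hm', hle, rfl⟩, hw⟩ := exists_lt_of_lt_csSup ⟨0, h0⟩ hlt'
    exact (h.grid_cross hm' hw.le).trans hle
  · by_contra! hcon
    have : (m : ℝ) / 2 ^ n ≤ sSup S := le_csSup hbdd ⟨n, m, hm, hcon.le, rfl⟩
    rw [div_le_iff₀ (by positivity)] at this
    linarith

/-- The level of `F x z` is the mean of the levels of `x` and `z`: in each generation, `x` and `z` are
squeezed between grid points, on which `F` is the mean. -/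
lemma level_apply (h : SymPair F α β) {c c' x z t s : ℝ} (hc : 0 ≤ c) (hc' : 0 ≤ c')
    (hx : x ∈ Set.Icc α β) (hz : z ∈ Set.Icc α β)
    (ht : t ∈ Set.Icc (0 : ℝ) 1) (hs : s ∈ Set.Icc (0 : ℝ) 1)
    (hxt : Level F α β c x t) (hzs : Level F α β c' z s) :
    Level F α β (c + c' + 4) (F x z) ((t + s) / 2) := by
  -- Lower and upper grid neighbours, losing at most `c + 2` steps; the endpoints of the grid
  -- serve when the tolerance would leave `[0, 1]`.
  have lower : ∀ {c x t : ℝ}, 0 ≤ c → x ∈ Set.Icc α β → t ∈ Set.Icc (0 : ℝ) 1 →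
      Level F α β c x t → ∀ n : ℕ, ∃ i : ℕ, i ≤ 2 ^ n ∧ grid F α β n i ≤ x ∧
        t * 2 ^ n - c - 2 ≤ i := by
    intro c x t hc hx ht hxt n
    have hp : (0 : ℝ) < 2 ^ n := by positivity
    rcases le_or_gt (t * 2 ^ n - c - 1) 0 with hneg | hpos
    · exact ⟨0, by simp, by simpa [h.grid_zero] using hx.1, by push_cast; linarith⟩
    · have h1 := Nat.floor_le hpos.le
      have h2 := Nat.lt_floor_add_one (t * 2 ^ n - c - 1)
      have hle : ⌊t * 2 ^ n - c - 1⌋₊ ≤ 2 ^ n := by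
        have : (⌊t * 2 ^ n - c - 1⌋₊ : ℝ) ≤ 2 ^ n := by nlinarith [ht.2]
        exact_mod_cast this
      exact ⟨_, hle, (hxt n _ hle).1 (by linarith), by linarith⟩
  have upper : ∀ {c x t : ℝ}, 0 ≤ c → x ∈ Set.Icc α β → t ∈ Set.Icc (0 : ℝ) 1 →
      Level F α β c x t → ∀ n : ℕ, ∃ i : ℕ, i ≤ 2 ^ n ∧ x ≤ grid F α β n i ∧
        (i : ℝ) ≤ t * 2 ^ n + c + 2 := by
    intro c x t hc hx ht hxt n
    have hp : (0 : ℝ) < 2 ^ n := by positivity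
    have hnn : 0 ≤ t * 2 ^ n + c + 1 := by nlinarith [ht.1]
    have h1 := Nat.le_ceil (t * 2 ^ n + c + 1)
    have h2 := Nat.ceil_lt_add_one hnn
    rcases le_or_gt ⌈t * 2 ^ n + c + 1⌉₊ (2 ^ n) with hle | hgt
    · exact ⟨_, hle, (hxt n _ hle).2 (by linarith), by linarith⟩
    · have : (2 ^ n : ℝ) < ⌈t * 2 ^ n + c + 1⌉₊ := by exact_mod_cast hgt
      exact ⟨2 ^ n, le_rfl, by simpa [h.grid_top] using hx.2, by push_cast; linarith⟩
  intro n m hm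
  rcases n with _ | n
  · have : (m : ℝ) ≤ 1 := by exact_mod_cast (by simpa using hm : m ≤ 1)
    have hm0 : (0 : ℝ) ≤ m := m.cast_nonneg
    have := ht.1; have := ht.2; have := hs.1; have := hs.2
    constructor <;> intro hlt <;> rw [pow_zero] at hlt <;> exfalso <;> linarith
  · have e : (t + s) / 2 * 2 ^ (n + 1) = t * 2 ^ n + s * 2 ^ n := by ring
    rw [e]
    have hpow : 2 ^ (n + 1) = 2 ^ n + 2 ^ n := by ring
    constructor
    · intro hlt
      obtain ⟨i, hi, hix, hi'⟩ := lower hc hx ht hxt n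
      obtain ⟨j, hj, hjz, hj'⟩ := lower hc' hz hs hzs n
      have hmij : m ≤ i + j := by
        have : (m : ℝ) ≤ i + j := by linarith
        exact_mod_cast this
      calc grid F α β (n + 1) m ≤ grid F α β (n + 1) (i + j) := h.grid_mono _ hmij (by omega)
        _ = F (grid F α β n i) (grid F α β n j) := (h.grid_apply n i j hi hj).symm
        _ ≤ F x z := h.le_apply (h.grid_mem _ _) (h.grid_mem _ _) hx hz hix hjz
    · intro hlt
      obtain ⟨i, hi, hix, hi'⟩ := upper hc hx ht hxt n
      obtain ⟨j, hj, hjz, hj'⟩ := upper hc' hz hs hzs n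
      have hmij : i + j ≤ m := by
        have : (i + j : ℝ) ≤ m := by linarith
        exact_mod_cast this
      calc F x z ≤ F (grid F α β n i) (grid F α β n j) :=
            h.le_apply hx hz (h.grid_mem _ _) (h.grid_mem _ _) hix hjz
        _ = grid F α β (n + 1) (i + j) := h.grid_apply n i j hi hj
        _ ≤ grid F α β (n + 1) m := h.grid_mono _ hmij hm

lemma lt_of_level_lt (h : SymPair F α β) {c x y s s' : ℝ} (hc : 0 ≤ c) (hs : 0 ≤ s) (hs' : s' ≤ 1)
    (hx : Level F α β c x s) (hy : Level F α β c y s') (hlt : s < s') : x < y := by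
  -- In a sufficiently fine generation, two consecutive grid points separate the two levels.
  obtain ⟨n, hn⟩ := pow_unbounded_of_one_lt ((2 * c + 4) / (s' - s)) (one_lt_two (α := ℝ))
  have hp : (0 : ℝ) < 2 ^ n := by positivity
  rw [div_lt_iff₀ (by linarith)] at hn
  have hnn : 0 ≤ s * 2 ^ n + c := by positivity
  set m := ⌊s * 2 ^ n + c⌋₊ + 1 with hm
  have h1 : s * 2 ^ n + c < m := by
    rw [hm]; push_cast
    exact Nat.lt_floor_add_one _
  have h2 : (m : ℝ) ≤ s * 2 ^ n + c + 1 := by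
    rw [hm]; push_cast
    linarith [Nat.floor_le hnn]
  have h3 : ((m + 1 : ℕ) : ℝ) + c < s' * 2 ^ n := by push_cast; nlinarith
  have hle : m + 1 ≤ 2 ^ n := by
    have : ((m + 1 : ℕ) : ℝ) ≤ 2 ^ n := by nlinarith
    exact_mod_cast this
  calc x ≤ grid F α β n m := (hx n m (by omega)).2 h1
    _ < grid F α β n (m + 1) := h.grid_lt_succ n m hle
    _ ≤ y := (hy n (m + 1) hle).1 h3

/-- Two points of the same level coincide: a gap at one level would propagate to uncountably many
levels, giving uncountably many disjoint open intervals. -/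
lemma not_lt_of_level_eq (h : SymPair F α β) {c x y t : ℝ} (hc : 0 ≤ c)
    (hx : x ∈ Set.Icc α β) (hy : y ∈ Set.Icc α β) (ht : t ∈ Set.Icc (0 : ℝ) 1)
    (hxt : Level F α β c x t) (hyt : Level F α β c y t) : ¬ x < y := by
  intro hxy
  choose! z hz hzs using fun (s : ℝ) (hs : s ∈ Set.Icc (0 : ℝ) 1) => h.exists_point hs
  have sep : ∀ s ∈ Set.Icc (0 : ℝ) 1, ∀ s' ∈ Set.Icc (0 : ℝ) 1, s < s' →
      F y (z s) < F x (z s') := by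
    intro s hs s' hs' hlt
    refine h.lt_of_level_lt (c := c + 0 + 4) (s := (t + s) / 2) (s' := (t + s') / 2)
      (by linarith) (by linarith [ht.1, hs.1]) (by linarith [ht.2, hs'.2])
      (h.level_apply hc le_rfl hy (hz s hs) ht hs hyt (hzs s hs))
      (h.level_apply hc le_rfl hx (hz s' hs') ht hs' hxt (hzs s' hs')) (by linarith)
  have hcount : (Set.Icc (0 : ℝ) 1).Countable := by
    refine Set.PairwiseDisjoint.countable_of_isOpen
      (s := fun s => Set.Ioo (F x (z s)) (F y (z s))) ?_ (fun _ _ => isOpen_Ioo) ?_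
    · intro s hs s' hs' hne
      refine Set.disjoint_left.2 fun w hw hw' => ?_
      rcases lt_or_gt_of_ne hne with hlt | hlt
      · exact absurd (sep s hs s' hs' hlt) (not_lt.2 (hw'.1.trans hw.2).le)
      · exact absurd (sep s' hs' s hs hlt) (not_lt.2 (hw.1.trans hw'.2).le)
    · intro s hs
      exact Set.nonempty_Ioo.2 (h.inc1 _ (hz s hs) hx hy hxy)
  have := Cardinal.le_aleph0_iff_set_countable.2 hcount
  rw [Cardinal.mk_Icc_real zero_lt_one] at this
  exact absurd this (not_le.2 Cardinal.aleph0_lt_continuum)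

theorem comm (h : SymPair F α β) {x z : ℝ} (hx : x ∈ Set.Icc α β) (hz : z ∈ Set.Icc α β) :
    F x z = F z x := by
  obtain ⟨t, ht, hxt⟩ := h.exists_level hx
  obtain ⟨s, hs, hzs⟩ := h.exists_level hz
  have h1 := h.level_apply le_rfl le_rfl hx hz ht hs hxt hzs
  have h2 := h.level_apply le_rfl le_rfl hz hx hs ht hzs hxt
  rw [add_comm s t] at h2
  have hts : (t + s) / 2 ∈ Set.Icc (0 : ℝ) 1 :=
    ⟨by linarith [ht.1, hs.1], by linarith [ht.2, hs.2]⟩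
  have m1 := h.map x hx z hz
  have m2 := h.map z hz x hx
  exact le_antisymm
    (not_lt.1 (h.not_lt_of_level_eq (by norm_num) m2 m1 hts h2 h1))
    (not_lt.1 (h.not_lt_of_level_eq (by norm_num) m1 m2 hts h1 h2))

end SymPair

section Classes

variable {I : Set ℝ} {F : ℝ → ℝ → ℝ}

lemma comm_trans
    (hmap : ∀ x ∈ I, ∀ y ∈ I, F x y ∈ I)
    (hrefl : ∀ x ∈ I, F x x = x)
    (hinc1 : ∀ y₀ ∈ I, StrictMonoOn (fun x => F x y₀) I)
    (hbisym : ∀ x ∈ I, ∀ y ∈ I, ∀ u ∈ I, ∀ v ∈ I,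
      F (F x y) (F u v) = F (F x u) (F y v))
    {a b c : ℝ} (ha : a ∈ I) (hb : b ∈ I) (hc : c ∈ I)
    (hab : F a b = F b a) (hbc : F b c = F c b) : F a c = F c a := by
  refine (hinc1 b hb).injOn (hmap a ha c hc) (hmap c hc a ha) ?_
  calc F (F a c) b = F (F a c) (F b b) := by rw [hrefl b hb]
    _ = F (F b a) (F c b) := by rw [hbisym a ha c hc b hb b hb, hab]
    _ = F (F c b) (F a b) := by rw [hbisym b hb a ha c hc b hb, hbc]
    _ = F (F c a) (F b b) := hbisym c hc b hb a ha b hb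
    _ = F (F c a) b := by rw [hrefl b hb]

/-- `F a b` is equivalent to neither of `a` and `b`, unless these are equivalent to each other. -/
lemma apply_not_comm
    (hmap : ∀ x ∈ I, ∀ y ∈ I, F x y ∈ I)
    (hrefl : ∀ x ∈ I, F x x = x)
    (hinc1 : ∀ y₀ ∈ I, StrictMonoOn (fun x => F x y₀) I)
    (hinc2 : ∀ x₀ ∈ I, StrictMonoOn (fun y => F x₀ y) I)
    (hbisym : ∀ x ∈ I, ∀ y ∈ I, ∀ u ∈ I, ∀ v ∈ I,
      F (F x y) (F u v) = F (F x u) (F y v))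
    {a b : ℝ} (ha : a ∈ I) (hb : b ∈ I) (hab : F a b ≠ F b a) :
    F (F a b) a ≠ F a (F a b) ∧ F (F a b) b ≠ F b (F a b) := by
  constructor
  · intro he
    refine hab ((hinc2 a ha).injOn (hmap a ha b hb) (hmap b hb a ha) ?_)
    have := hbisym a ha b hb a ha a ha
    rw [hrefl a ha] at this
    rw [← he, this]
  · intro he
    refine hab ((hinc1 b hb).injOn (hmap a ha b hb) (hmap b hb a ha) ?_)
    have := hbisym b hb b hb a ha b hb
    rw [hrefl b hb] at this
    rw [he, this]

/-- A point between two equivalent points is equivalent to both of them. -/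
lemma comm_of_between (hI : I.OrdConnected)
    (hrefl : ∀ x ∈ I, F x x = x)
    (hinc1 : ∀ y₀ ∈ I, StrictMonoOn (fun x => F x y₀) I)
    (hinc2 : ∀ x₀ ∈ I, StrictMonoOn (fun y => F x₀ y) I)
    (hbisym : ∀ x ∈ I, ∀ y ∈ I, ∀ u ∈ I, ∀ v ∈ I,
      F (F x y) (F u v) = F (F x u) (F y v))
    {α β x : ℝ} (hα : α ∈ I) (hβ : β ∈ I) (hαβ : F α β = F β α)
    (hx : x ∈ Set.Icc α β) : F x α = F α x ∧ F x β = F β x := by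
  rcases (hx.1.trans hx.2).eq_or_lt with rfl | hlt
  · obtain rfl : x = α := le_antisymm hx.2 hx.1
    exact ⟨rfl, rfl⟩
  · have hsub : Set.Icc α β ⊆ I := hI.out hα hβ
    have hα' : α ∈ Set.Icc α β := ⟨le_rfl, hlt.le⟩
    have hβ' : β ∈ Set.Icc α β := ⟨hlt.le, le_rfl⟩
    have h : SymPair F α β :=
      { lt := hlt
        map := fun x hx y hy => by
          constructor
          · calc α = F α α := (hrefl α hα).symm
              _ ≤ F x α := (hinc1 α hα).monotoneOn hα (hsub hx) hx.1
              _ ≤ F x y := (hinc2 x (hsub hx)).monotoneOn hα (hsub hy) hy.1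
          · calc F x y ≤ F β y := (hinc1 y (hsub hy)).monotoneOn (hsub hx) hβ hx.2
              _ ≤ F β β := (hinc2 β hβ).monotoneOn (hsub hy) hβ hy.2
              _ = β := hrefl β hβ
        refl := fun x hx => hrefl x (hsub hx)
        inc1 := fun y hy => (hinc1 y (hsub hy)).mono hsub
        inc2 := fun y hy => (hinc2 y (hsub hy)).mono hsub
        bisym := fun x hx y hy u hu v hv =>
          hbisym x (hsub hx) y (hsub hy) u (hsub hu) v (hsub hv)
        sym := hαβ }
    exact ⟨h.comm hx hα', h.comm hx hβ'⟩

end Classes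

/-- If A < B are equivalence classes of a ∼ b ⟺ F(a,b)=F(b,a), then
F(A,B) lies strictly between A and B. -/
theorem stmt_7 (I : Set ℝ) (hI : I.OrdConnected) (F : ℝ → ℝ → ℝ)
    (hmap : ∀ x ∈ I, ∀ y ∈ I, F x y ∈ I)
    (hrefl : ∀ x ∈ I, F x x = x)
    (hinc1 : ∀ y₀ ∈ I, StrictMonoOn (fun x => F x y₀) I)
    (hinc2 : ∀ x₀ ∈ I, StrictMonoOn (fun y => F x₀ y) I)
    (hbisym : ∀ x ∈ I, ∀ y ∈ I, ∀ u ∈ I, ∀ v ∈ I,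
      F (F x y) (F u v) = F (F x u) (F y v))
    (A B : Set ℝ)
    (hA : ∃ a₀ ∈ I, A = {x ∈ I | F a₀ x = F x a₀})
    (hB : ∃ b₀ ∈ I, B = {x ∈ I | F b₀ x = F x b₀})
    (hAB : ∀ a ∈ A, ∀ b ∈ B, a < b) :
    (∀ a ∈ A, ∀ b ∈ B, a < F a b ∧ F a b < b) ∧
    (∀ a ∈ A, ∀ z ∈ Set.image2 F A B, a < z) ∧
    (∀ z ∈ Set.image2 F A B, ∀ b ∈ B, z < b) := by
  obtain ⟨a₀, ha₀, rfl⟩ := hA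
  obtain ⟨b₀, hb₀, rfl⟩ := hB
  have tr := fun {a b c : ℝ} => @comm_trans I F hmap hrefl hinc1 hbisym a b c
  have ncomm : ∀ a ∈ {x ∈ I | F a₀ x = F x a₀}, ∀ b ∈ {x ∈ I | F b₀ x = F x b₀},
      F a b ≠ F b a := fun a ha b hb he =>
    -- Otherwise `b` would belong to both classes, and `b < b`.
    lt_irrefl b (hAB b ⟨hb.1, tr ha₀ ha.1 hb.1 ha.2 he⟩ b hb)
  have basic : ∀ a ∈ {x ∈ I | F a₀ x = F x a₀}, ∀ b ∈ {x ∈ I | F b₀ x = F x b₀},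
      a < F a b ∧ F a b < b := by
    intro a ha b hb
    have hlt := hAB a ha b hb
    constructor
    · calc a = F a a := (hrefl a ha.1).symm
        _ < F a b := hinc2 a ha.1 ha.1 hb.1 hlt
    · calc F a b < F b b := hinc1 b hb.1 ha.1 hb.1 hlt
        _ = b := hrefl b hb.1
  refine ⟨basic, ?_, ?_⟩
  · rintro a' ha' z ⟨a, ha, b, hb, rfl⟩
    by_contra! hle
    have haa' : F a a' = F a' a := tr ha.1 ha₀ ha'.1 ha.2.symm ha'.2
    exact (apply_not_comm hmap hrefl hinc1 hinc2 hbisym ha.1 hb.1 (ncomm a ha b hb)).1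
      (comm_of_between hI hrefl hinc1 hinc2 hbisym ha.1 ha'.1 haa' ⟨(basic a ha b hb).1.le, hle⟩).1
  · rintro z ⟨a, ha, b, hb, rfl⟩ b' hb'
    by_contra! hle
    have hbb' : F b' b = F b b' := tr hb'.1 hb₀ hb.1 hb'.2.symm hb.2
    exact (apply_not_comm hmap hrefl hinc1 hinc2 hbisym ha.1 hb.1 (ncomm a ha b hb)).2
      (comm_of_between hI hrefl hinc1 hinc2 hbisym hb'.1 hb.1 hbb' ⟨hle, (basic a ha b hb).2.le⟩).2
end

section
/- Let I be a proper interval and F : I × I → I a reflexive, partially strictly increasing, bisymmetric map. If there exist α ≠ β in I with F(α,β) = F(β,α), then F is symmetric on all of I: F(x,y) = F(y,x) for every x, y ∈ I. -/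
/-!
Write `xy` for `F x y` and `x ~ y` for `xy = yx`. The proof works on an abstract linear order `X`
which is complete (nonempty bounded sets have suprema) and has a countable order-dense subset.

*Algebra.* Bisymmetry, reflexivity and cancellation make `~` an equivalence relation compatible
with `F`, and `xa ~ xb` implies `a ~ b` (likewise on the other side).

*Classes are convex* (`Bisym.comm_of_mem_Icc`). If `α ~ β` and `α < β`, iterated means of `α` and
`β` give a strictly increasing `f` on the dyadics of `[0, 1]` with `f ((d + e) / 2) = F (f d) (f e)`.
Say that `x` sits at the real `t` if it fills the cut `t` of the dyadics under `f`. If two points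
`x < y` sit at one `t`, then for every `s` and every `z` sitting at `s`, the nonempty interval
`(zx, zy)` sits at `(s + t) / 2`; this is an uncountable family of disjoint intervals, which is
impossible. So cuts are filled by exactly one point, and since `xy` and `yx` always sit at the same
place, they coincide.

*There is only one class* (`Bisym.comm_of_comm`). For every `z` the class of `zα` contains the
nondegenerate interval `[zα, zβ]`, and `z ≁ w` gives `zα ≁ wα`, so there are only countably many
classes. Between inequivalent `a < b` there are further classes, since `a`, `ab`, `(ab)b`, `b` are
pairwise inequivalent. Nested intervals with inequivalent endpoints, avoiding the classes one after
the other, then produce a point belonging to no class.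
-/

/-- A reflexive, partially strictly increasing, bisymmetric operation on a linear order. -/
structure Bisym {X : Type*} [LinearOrder X] (F : X → X → X) : Prop where
  refl : ∀ x, F x x = x
  left : ∀ y, StrictMono (fun x => F x y)
  right : ∀ x, StrictMono (fun y => F x y)
  bisym : ∀ x y u v, F (F x y) (F u v) = F (F x u) (F y v)

set_option linter.unusedSectionVars false

namespace Bisym

variable {X : Type*} [LinearOrder X] {F : X → X → X}

/-! ### The relation of commuting -/

/-- `x` and `y` commute under `F`. -/
def Comm (F : X → X → X) (x y : X) : Prop := F x y = F y x

theorem Comm.symm {x y : X} (h : Comm F x y) : Comm F y x := Eq.symm h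

theorem Comm.rfl {x : X} : Comm F x x := Eq.refl _

theorem Comm.trans (hF : Bisym F) {x y z : X} (h1 : Comm F x y) (h2 : Comm F y z) :
    Comm F x z := by
  unfold Comm at *
  -- `(xy)(xz) = x(yz) = x(zy) = (xz)(xy) = (xz)(yx) = (xy)(zx)`, then cancel `xy`.
  apply (hF.right (F x y)).injective
  change F (F x y) (F x z) = F (F x y) (F z x)
  rw [hF.bisym x y x z, h2, ← hF.bisym x z x y, h1, hF.bisym x z y x, h1]

theorem Comm.mul (hF : Bisym F) {x y a b : X} (h1 : Comm F x y) (h2 : Comm F a b) :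
    Comm F (F x a) (F y b) := by
  unfold Comm at *
  rw [hF.bisym x a y b, h1, h2, hF.bisym]

theorem Comm.cancel_left (hF : Bisym F) {x a b : X} (h : Comm F (F x a) (F x b)) :
    Comm F a b := by
  unfold Comm at *
  rw [hF.bisym, hF.bisym x b x a] at h
  exact (hF.right _).injective h

theorem Comm.cancel_right (hF : Bisym F) {x a b : X} (h : Comm F (F a x) (F b x)) :
    Comm F a b := by
  unfold Comm at *
  rw [hF.bisym, hF.bisym b x a x] at h
  exact (hF.left _).injective h

theorem lt_mul (hF : Bisym F) {x y : X} (h : x < y) : x < F x y := by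
  have := hF.right x h
  simpa [hF.refl] using this

theorem mul_lt (hF : Bisym F) {x y : X} (h : x < y) : F x y < y := by
  have := hF.left y h
  simpa [hF.refl] using this

theorem mul_le_mul (hF : Bisym F) {x y a b : X} (h1 : x ≤ y) (h2 : a ≤ b) :
    F x a ≤ F y b :=
  ((hF.left a).monotone h1).trans ((hF.right y).monotone h2)

/-! ### Iterated means of a commuting pair -/

/-- `dya F α β n k` is the iterated mean of `α` and `β` attached to the dyadic `k / 2 ^ n`;
it is meaningful only for `k ≤ 2 ^ n`. -/
def dya (F : X → X → X) (α β : X) : ℕ → ℕ → X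
  | 0, k => if k = 0 then α else β
  | n + 1, k =>
    if k % 2 = 0 then dya F α β n (k / 2)
    else F (dya F α β n (k / 2)) (dya F α β n (k / 2 + 1))

theorem dya_even (α β : X) (n k : ℕ) : dya F α β (n + 1) (2 * k) = dya F α β n k := by
  simp [dya]

theorem dya_odd (α β : X) (n k : ℕ) :
    dya F α β (n + 1) (2 * k + 1) = F (dya F α β n k) (dya F α β n (k + 1)) := by
  have h1 : (2 * k + 1) % 2 = 1 := by omega
  have h2 : (2 * k + 1) / 2 = k := by omega
  simp [dya, h1, h2]

theorem dya_mul (hF : Bisym F) {α β : X} (h : Comm F α β) (n : ℕ) :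
    ∀ j k, j ≤ 2 ^ n → k ≤ 2 ^ n →
      F (dya F α β n j) (dya F α β n k) = dya F α β (n + 1) (j + k) := by
  induction n with
  | zero =>
    intro j k hj hk
    have h' : F α β = F β α := h
    have hj' : j = 0 ∨ j = 1 := by simp at hj; omega
    have hk' : k = 0 ∨ k = 1 := by simp at hk; omega
    rcases hj' with rfl | rfl <;> rcases hk' with rfl | rfl <;> simp [dya, hF.refl, h']
  | succ n ih =>
    intro j k hj hk
    rw [pow_succ] at hj hk
    obtain ⟨j', rfl | rfl⟩ := Nat.even_or_odd' j <;> obtain ⟨k', rfl | rfl⟩ := Nat.even_or_odd' k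
    · rw [← mul_add, dya_even, dya_even, dya_even, ih _ _ (by omega) (by omega)]
    · rw [← add_assoc, ← mul_add, dya_even, dya_odd, dya_odd, ← ih _ _ (by omega) (by omega),
        add_assoc, ← ih _ _ (by omega) (by omega), hF.bisym, hF.refl]
    · rw [show 2 * j' + 1 + 2 * k' = 2 * (j' + k') + 1 by ring, dya_even, dya_odd, dya_odd,
        ← ih _ _ (by omega) (by omega), show j' + k' + 1 = j' + 1 + k' by ring,
        ← ih _ _ (by omega) (by omega), hF.bisym, hF.refl]
    · -- Swap the last pair first, so that both inner means land on `j' + k' + 1`.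
      have hswap : F (dya F α β n k') (dya F α β n (k' + 1))
          = F (dya F α β n (k' + 1)) (dya F α β n k') := by
        rw [ih _ _ (by omega) (by omega), ih _ _ (by omega) (by omega), add_comm k']
      rw [show 2 * j' + 1 + (2 * k' + 1) = 2 * (j' + k' + 1) by ring, dya_even, dya_odd, dya_odd,
        hswap, hF.bisym, ih _ _ (by omega) (by omega), ih _ _ (by omega) (by omega),
        show j' + (k' + 1) = j' + k' + 1 by ring, show j' + 1 + k' = j' + k' + 1 by ring, hF.refl]

theorem dya_lt_succ (hF : Bisym F) {α β : X} (h : α < β) (n : ℕ) :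
    ∀ k, k < 2 ^ n → dya F α β n k < dya F α β n (k + 1) := by
  induction n with
  | zero =>
    intro k hk
    have : k = 0 := by simpa using hk
    subst this
    simpa [dya] using h
  | succ n ih =>
    intro k hk
    rw [pow_succ] at hk
    obtain ⟨k', rfl | rfl⟩ := Nat.even_or_odd' k
    · rw [dya_even, dya_odd]
      exact hF.lt_mul (ih _ (by omega))
    · rw [show 2 * k' + 1 + 1 = 2 * (k' + 1) by ring, dya_even, dya_odd]
      exact hF.mul_lt (ih _ (by omega))

theorem dya_lt (hF : Bisym F) {α β : X} (h : α < β) (n : ℕ) {j k : ℕ} (hjk : j < k)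
    (hk : k ≤ 2 ^ n) : dya F α β n j < dya F α β n k := by
  induction k, hjk using Nat.le_induction with
  | base => exact hF.dya_lt_succ h n j (by omega)
  | succ k hk' ih => exact (ih (by omega)).trans (hF.dya_lt_succ h n k (by omega))

theorem dya_scale (α β : X) (n k m : ℕ) : dya F α β (n + m) (2 ^ m * k) = dya F α β n k := by
  induction m with
  | zero => simp
  | succ m ih => rw [← add_assoc, pow_succ', mul_assoc, dya_even, ih]

/-- The dyadic rationals of `[0, 1]`. -/
def D : Set ℝ := {d | ∃ n k : ℕ, k ≤ 2 ^ n ∧ d = (k : ℝ) / 2 ^ n}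

/-- Two dyadics have representations with a common denominator. -/
theorem exists_common {d e : ℝ} (hd : d ∈ D) (he : e ∈ D) :
    ∃ n j k : ℕ, j ≤ 2 ^ n ∧ k ≤ 2 ^ n ∧ d = (j : ℝ) / 2 ^ n ∧ e = (k : ℝ) / 2 ^ n := by
  obtain ⟨n, j, hj, rfl⟩ := hd
  obtain ⟨m, k, hk, rfl⟩ := he
  refine ⟨n + m, 2 ^ m * j, 2 ^ n * k, ?_, ?_, ?_, ?_⟩
  · rw [pow_add, mul_comm]; gcongr
  · rw [pow_add]; gcongr
  · push_cast; rw [pow_add]; field_simp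
  · push_cast; rw [pow_add]; field_simp

theorem exists_dyadic {u v : ℝ} (hu : 0 ≤ u) (huv : u < v) (hv : v ≤ 1) :
    ∃ d ∈ D, u < d ∧ d < v := by
  obtain ⟨n, hn⟩ := exists_pow_lt_of_lt_one (sub_pos.2 huv) (by norm_num : (1 / 2 : ℝ) < 1)
  have hp : (0 : ℝ) < 2 ^ n := by positivity
  have h1 := Nat.lt_floor_add_one (u * 2 ^ n)
  have h2 := Nat.floor_le (by positivity : 0 ≤ u * 2 ^ n)
  have h3 : 1 < (v - u) * 2 ^ n := by
    rw [one_div, inv_pow] at hn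
    rwa [inv_lt_iff_one_lt_mul₀ hp] at hn
  have h4 : ((⌊u * 2 ^ n⌋₊ + 1 : ℕ) : ℝ) < v * 2 ^ n := by push_cast; nlinarith
  refine ⟨((⌊u * 2 ^ n⌋₊ + 1 : ℕ) : ℝ) / 2 ^ n, ⟨n, _, ?_, rfl⟩, ?_, ?_⟩
  · have : ((⌊u * 2 ^ n⌋₊ + 1 : ℕ) : ℝ) ≤ ((2 ^ n : ℕ) : ℝ) := by
      push_cast at h4 ⊢; nlinarith
    exact_mod_cast this
  · rw [lt_div_iff₀ hp]; push_cast; exact h1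
  · rwa [div_lt_iff₀ hp]

/-- The dyadic parametrisation of the iterated means of a commuting pair. -/
theorem exists_param (hF : Bisym F) {α β : X} (h : Comm F α β) (hlt : α < β) :
    ∃ f : ℝ → X, f 0 = α ∧ f 1 = β ∧ StrictMonoOn f D ∧
      ∀ d ∈ D, ∀ e ∈ D, (d + e) / 2 ∈ D ∧ F (f d) (f e) = f ((d + e) / 2) := by
  classical
  let f : ℝ → X := fun d =>
    if hd : d ∈ D then dya F α β hd.choose hd.choose_spec.choose else α
  have hf : ∀ n k : ℕ, k ≤ 2 ^ n → f ((k : ℝ) / 2 ^ n) = dya F α β n k := by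
    intro n k hk
    have hd : ((k : ℝ) / 2 ^ n) ∈ D := ⟨n, k, hk, rfl⟩
    have hs := hd.choose_spec.choose_spec
    simp only [f, dif_pos hd]
    set m := hd.choose
    set j := hd.choose_spec.choose
    have h1 : (k : ℝ) * 2 ^ m = j * 2 ^ n := by
      have h0 : (k : ℝ) / 2 ^ n = (j : ℝ) / 2 ^ m := hs.2
      rwa [div_eq_div_iff (by positivity) (by positivity)] at h0
    have h2 : 2 ^ n * j = 2 ^ m * k := by
      have : k * 2 ^ m = j * 2 ^ n := by exact_mod_cast h1
      linarith
    rw [← dya_scale α β m j n, ← dya_scale α β n k m, h2, add_comm]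
  refine ⟨f, ?_, ?_, ?_, ?_⟩
  · simpa [dya] using hf 0 0 (by simp)
  · simpa [dya] using hf 0 1 (by simp)
  · intro d hd e he hde
    obtain ⟨n, j, k, hj, hk, rfl, rfl⟩ := exists_common hd he
    rw [hf _ _ hj, hf _ _ hk]
    refine hF.dya_lt hlt n ?_ hk
    have hp : (0 : ℝ) < 2 ^ n := by positivity
    rw [div_lt_div_iff_of_pos_right hp] at hde
    exact_mod_cast hde
  · intro d hd e he
    obtain ⟨n, j, k, hj, hk, rfl, rfl⟩ := exists_common hd he
    have hjk : j + k ≤ 2 ^ (n + 1) := by rw [pow_succ]; omega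
    have hm : ((j : ℝ) / 2 ^ n + (k : ℝ) / 2 ^ n) / 2 = ((j + k : ℕ) : ℝ) / 2 ^ (n + 1) := by
      push_cast; rw [pow_succ]; field_simp
    rw [hm]
    exact ⟨⟨_, _, hjk, rfl⟩, by rw [hf _ _ hj, hf _ _ hk, hf _ _ hjk, hF.dya_mul h n j k hj hk]⟩

/-! ### Commuting classes are convex -/

/-- `x` fills the cut of the dyadics at `t`, transported by `f`. -/
def At (f : ℝ → X) (t : ℝ) (x : X) : Prop :=
  ∀ d ∈ D, (d < t → f d ≤ x) ∧ (t < d → x ≤ f d)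

theorem At.mul (hF : Bisym F) {f : ℝ → X} (hmono : StrictMonoOn f D)
    (hmid : ∀ d ∈ D, ∀ e ∈ D, (d + e) / 2 ∈ D ∧ F (f d) (f e) = f ((d + e) / 2))
    {s t : ℝ} (hs : s ∈ Set.Ioo (0 : ℝ) 1) (ht : t ∈ Set.Ioo (0 : ℝ) 1) {x y : X}
    (hx : At f s x) (hy : At f t y) : At f ((s + t) / 2) (F x y) := by
  intro q hq
  constructor
  · intro hlt
    obtain ⟨d, hd, hd1, hd2⟩ := exists_dyadic (u := max 0 (s - ((s + t) / 2 - q))) (v := s)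
      (le_max_left _ _) (max_lt hs.1 (by linarith)) hs.2.le
    obtain ⟨e, he, he1, he2⟩ := exists_dyadic (u := max 0 (t - ((s + t) / 2 - q))) (v := t)
      (le_max_left _ _) (max_lt ht.1 (by linarith)) ht.2.le
    have hd3 := (le_max_right _ _).trans_lt hd1
    have he3 := (le_max_right _ _).trans_lt he1
    obtain ⟨h1, h2⟩ := hmid d hd e he
    calc f q ≤ f ((d + e) / 2) := (hmono.le_iff_le hq h1).2 (by linarith)
      _ = F (f d) (f e) := h2.symm
      _ ≤ F x y := hF.mul_le_mul ((hx d hd).1 hd2) ((hy e he).1 he2)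
  · intro hlt
    obtain ⟨d, hd, hd1, hd2⟩ := exists_dyadic (u := s) (v := min 1 (s + (q - (s + t) / 2)))
      hs.1.le (lt_min hs.2 (by linarith)) (min_le_left _ _)
    obtain ⟨e, he, he1, he2⟩ := exists_dyadic (u := t) (v := min 1 (t + (q - (s + t) / 2)))
      ht.1.le (lt_min ht.2 (by linarith)) (min_le_left _ _)
    have hd3 := hd2.trans_le (min_le_right _ _)
    have he3 := he2.trans_le (min_le_right _ _)
    obtain ⟨h1, h2⟩ := hmid d hd e he
    calc F x y ≤ F (f d) (f e) := hF.mul_le_mul ((hx d hd).2 hd1) ((hy e he).2 he1)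
      _ = f ((d + e) / 2) := h2
      _ ≤ f q := (hmono.le_iff_le h1 hq).2 (by linarith)

theorem At.not_cut_lt {f : ℝ → X} (hmono : StrictMonoOn f D) {s t : ℝ}
    (hs : 0 ≤ s) (ht : t ≤ 1) {x : X} (hx : At f s x) (hx' : At f t x) : ¬ s < t := by
  intro hst
  obtain ⟨d, hd, hd1, hd2⟩ := exists_dyadic hs hst ht
  obtain ⟨e, he, he1, he2⟩ := exists_dyadic (hs.trans hd1.le) hd2 ht
  exact absurd (hmono hd he he1) (not_lt.2 (((hx' e he).1 he2).trans ((hx d hd).2 hd1)))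

theorem exists_at (hsup : ∀ S : Set X, S.Nonempty → BddAbove S → ∃ z, IsLUB S z)
    {f : ℝ → X} (hmono : StrictMonoOn f D) {s : ℝ} (hs : s ∈ Set.Ioo (0 : ℝ) 1) :
    ∃ z, At f s z := by
  have hub : ∀ e ∈ D, s < e → f e ∈ upperBounds (f '' {d | d ∈ D ∧ d < s}) := by
    rintro e he hse _ ⟨d, ⟨hd, hds⟩, rfl⟩
    exact (hmono hd he (hds.trans hse)).le
  obtain ⟨d, hd, _, hd2⟩ := exists_dyadic le_rfl hs.1 hs.2.le
  obtain ⟨e, he, he1, _⟩ := exists_dyadic hs.1.le hs.2 le_rfl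
  obtain ⟨z, hz⟩ := hsup (f '' {d | d ∈ D ∧ d < s}) ⟨_, d, ⟨hd, hd2⟩, rfl⟩ ⟨_, hub e he he1⟩
  exact ⟨z, fun q hq => ⟨fun h => hz.1 ⟨q, ⟨hq, h⟩, rfl⟩, fun h => hz.2 (hub q hq h)⟩⟩

/-- A cut is filled by at most one point: a gap at one cut would propagate to uncountably many
disjoint gaps. -/
theorem At.unique (hF : Bisym F)
    (hsup : ∀ S : Set X, S.Nonempty → BddAbove S → ∃ z, IsLUB S z)
    {Q : Set X} (hQ : Q.Countable) (hQd : ∀ x y, x < y → ∃ q ∈ Q, x < q ∧ q < y)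
    {f : ℝ → X} (hmono : StrictMonoOn f D)
    (hmid : ∀ d ∈ D, ∀ e ∈ D, (d + e) / 2 ∈ D ∧ F (f d) (f e) = f ((d + e) / 2))
    {t : ℝ} (ht : t ∈ Set.Ioo (0 : ℝ) 1) {x y : X}
    (hx : At f t x) (hy : At f t y) : x = y := by
  by_contra hne
  wlog hlt : x < y generalizing x y
  · exact this hy hx (Ne.symm hne) (lt_of_le_of_ne (not_lt.1 hlt) (Ne.symm hne))
  have key : ∀ s : ℝ, ∃ q, s ∈ Set.Ioo (0 : ℝ) 1 → q ∈ Q ∧ At f ((s + t) / 2) q := by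
    intro s
    by_cases hs : s ∈ Set.Ioo (0 : ℝ) 1
    · obtain ⟨z, hz⟩ := exists_at hsup hmono hs
      obtain ⟨q, hqQ, hq1, hq2⟩ := hQd _ _ (hF.right z hlt)
      have h1 := At.mul hF hmono hmid hs ht hz hx
      have h2 := At.mul hF hmono hmid hs ht hz hy
      exact ⟨q, fun _ => ⟨hqQ, fun d hd =>
        ⟨fun h => ((h1 d hd).1 h).trans hq1.le, fun h => hq2.le.trans ((h2 d hd).2 h)⟩⟩⟩
    · exact ⟨x, fun h => absurd h hs⟩
  choose q hq using key
  have hinj : Set.InjOn q (Set.Ioo (0 : ℝ) 1) := by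
    intro s hs s' hs' heq
    have h1 := (hq s hs).2
    have h2 := (hq s' hs').2
    rw [← heq] at h2
    have b1 := At.not_cut_lt hmono (by linarith [hs.1, ht.1]) (by linarith [hs'.2, ht.2]) h1 h2
    have b2 := At.not_cut_lt hmono (by linarith [hs'.1, ht.1]) (by linarith [hs.2, ht.2]) h2 h1
    linarith
  have hc : (Set.Ioo (0 : ℝ) 1).Countable :=
    Set.MapsTo.countable_of_injOn (fun s hs => (hq s hs).1) hinj hQ
  exact absurd hc (by
    rw [← Cardinal.le_aleph0_iff_set_countable, Cardinal.mk_Ioo_real zero_lt_one, not_le]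
    exact Cardinal.aleph0_lt_continuum)

theorem comm_of_mem_Icc (hF : Bisym F)
    (hsup : ∀ S : Set X, S.Nonempty → BddAbove S → ∃ z, IsLUB S z)
    {Q : Set X} (hQ : Q.Countable) (hQd : ∀ x y, x < y → ∃ q ∈ Q, x < q ∧ q < y)
    {α β p : X} (h : Comm F α β) (h1 : α ≤ p) (h2 : p ≤ β) : Comm F α p := by
  rcases (h1.trans h2).eq_or_lt with rfl | hlt
  · rw [le_antisymm h1 h2]; exact Comm.rfl
  obtain ⟨f, hf0, hf1, hmono, hmid⟩ := hF.exists_param h hlt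
  have d0 : (0 : ℝ) ∈ D := ⟨0, 0, by simp⟩
  have d1 : (1 : ℝ) ∈ D := ⟨0, 1, by simp⟩
  obtain ⟨d12, f12⟩ := hmid 0 d0 1 d1
  obtain ⟨d14, f14⟩ := hmid _ d12 0 d0
  obtain ⟨d34, f34⟩ := hmid _ d12 1 d1
  norm_num at d12 f12 d14 f14 d34 f34
  -- `F (f (1/2)) p` stays away from the endpoints, so its cut lies in the open unit interval.
  set γ := f (1 / 2) with hγ
  have hαγ : Comm F α γ := by
    rw [← f12, hf0, hf1]
    have := Comm.mul hF (Comm.rfl (F := F) (x := α)) h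
    rwa [hF.refl] at this
  suffices hs : Comm F (F γ p) γ by
    have h3 : Comm F (F γ p) (F γ γ) := by rwa [hF.refl]
    exact hαγ.trans hF (Comm.cancel_left hF h3).symm
  set r := F γ p
  have hr1 : f (1 / 4) ≤ r := by
    rw [← f14, hf0]; exact hF.mul_le_mul le_rfl h1
  have hr2 : r ≤ f (3 / 4) := by
    rw [← f34, hf1]; exact hF.mul_le_mul le_rfl h2
  let T : Set ℝ := {d | d ∈ D ∧ f d ≤ r}
  have hT : ∀ d ∈ T, d ≤ 3 / 4 := fun d hd => (hmono.le_iff_le hd.1 d34).1 (hd.2.trans hr2)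
  have hTb : BddAbove T := ⟨_, hT⟩
  have hTm : (1 / 4 : ℝ) ∈ T := ⟨d14, hr1⟩
  have ht1 : 1 / 4 ≤ sSup T := le_csSup hTb hTm
  have ht2 : sSup T ≤ 3 / 4 := csSup_le ⟨_, hTm⟩ hT
  have hrat : At f (sSup T) r := by
    intro d hd
    constructor
    · intro hlt
      obtain ⟨e, he, hde⟩ := exists_lt_of_lt_csSup ⟨_, hTm⟩ hlt
      exact (hmono hd he.1 hde).le.trans he.2
    · intro hlt
      by_contra hcon
      exact absurd (le_csSup hTb (show d ∈ T from ⟨hd, (not_le.1 hcon).le⟩)) (not_le.2 hlt)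
  have hγat : At f (1 / 2) γ := fun d hd =>
    ⟨fun h => (hmono hd d12 h).le, fun h => (hmono d12 hd h).le⟩
  have ht : sSup T ∈ Set.Ioo (0 : ℝ) 1 := ⟨by linarith, by linarith⟩
  have hhalf : (1 / 2 : ℝ) ∈ Set.Ioo (0 : ℝ) 1 := by norm_num
  have A := At.mul hF hmono hmid ht hhalf hrat hγat
  have B := At.mul hF hmono hmid hhalf ht hγat hrat
  rw [add_comm (1 / 2 : ℝ)] at B
  exact At.unique hF hsup hQ hQd hmono hmid ⟨by linarith, by linarith⟩ A B

/-! ### There is only one commuting class -/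

/-- If commuting is detected by a labelling with values in `ℕ` and classes are convex, then all
points commute. -/
theorem comm_of_countable (hF : Bisym F)
    (hsup : ∀ S : Set X, S.Nonempty → BddAbove S → ∃ z, IsLUB S z)
    (hconv : ∀ a b p : X, Comm F a b → a ≤ p → p ≤ b → Comm F a p)
    (e : X → ℕ) (he : ∀ z w, e z = e w → Comm F z w) {a b : X} (hab : a < b) :
    Comm F a b := by
  by_contra hnc
  have step : ∀ (n : ℕ) (I : {I : X × X // I.1 < I.2 ∧ ¬ Comm F I.1 I.2}),
      ∃ J : {I : X × X // I.1 < I.2 ∧ ¬ Comm F I.1 I.2},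
        I.1.1 ≤ J.1.1 ∧ J.1.2 ≤ I.1.2 ∧ ∀ w, J.1.1 ≤ w → w ≤ J.1.2 → e w ≠ n := by
    rintro n ⟨⟨a, b⟩, hab, hnc⟩
    simp only at hab hnc
    have h1 := hF.lt_mul hab
    have h2 := hF.mul_lt hab
    set c := F a b with hc
    have h3 := hF.lt_mul h2
    have h4 := hF.mul_lt h2
    set d := F c b with hd
    have hac : ¬ Comm F a c := by
      intro h
      have h' : Comm F (F a a) (F a b) := by rwa [hF.refl]
      exact hnc (h'.cancel_left hF)
    have hcb : ¬ Comm F c b := by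
      intro h
      have h' : Comm F (F a b) (F b b) := by rwa [hF.refl]
      exact hnc (h'.cancel_right hF)
    have hdb : ¬ Comm F d b := by
      intro h
      have h' : Comm F (F c b) (F b b) := by rwa [hF.refl]
      exact hcb (h'.cancel_right hF)
    have hcd : ¬ Comm F c d := by
      intro h
      have h' : Comm F (F c c) (F c b) := by rwa [hF.refl]
      exact hcb (h'.cancel_left hF)
    by_cases hw : ∀ w, a ≤ w → w ≤ c → e w ≠ n
    · exact ⟨⟨(a, c), h1, hac⟩, le_rfl, h2.le, hw⟩
    · refine ⟨⟨(d, b), h4, hdb⟩, (h1.trans h3).le, le_rfl, ?_⟩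
      intro w' hw1 hw2 hw3
      push Not at hw
      obtain ⟨w, hwa, hwc, hwn⟩ := hw
      have hww := he w w' (hwn.trans hw3.symm)
      have k1 := hconv w w' c hww hwc (h3.le.trans hw1)
      have k2 := hconv w w' d hww (hwc.trans h3.le) hw1
      exact hcd (k1.symm.trans hF k2)
  choose g hg1 hg2 hg3 using step
  let s : ℕ → {I : X × X // I.1 < I.2 ∧ ¬ Comm F I.1 I.2} :=
    fun n => Nat.rec ⟨(a, b), hab, hnc⟩ g n
  have hl : Monotone fun n => (s n).1.1 := monotone_nat_of_le_succ fun n => hg1 n (s n)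
  have hr : Antitone fun n => (s n).1.2 := antitone_nat_of_succ_le fun n => hg2 n (s n)
  have hlr : ∀ m n, (s m).1.1 ≤ (s n).1.2 := fun m n =>
    (hl (le_max_left m n)).trans ((s (max m n)).2.1.le.trans (hr (le_max_right m n)))
  have hub : ∀ n, (s n).1.2 ∈ upperBounds (Set.range fun m => (s m).1.1) := by
    rintro n _ ⟨m, rfl⟩
    exact hlr m n
  obtain ⟨z, hz⟩ := hsup _ (Set.range_nonempty fun m => (s m).1.1) ⟨_, hub 0⟩
  exact hg3 (e z) (s (e z)) z (hz.1 ⟨e z + 1, rfl⟩) (hz.2 (hub (e z + 1))) rfl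

theorem comm_of_comm (hF : Bisym F)
    (hsup : ∀ S : Set X, S.Nonempty → BddAbove S → ∃ z, IsLUB S z)
    {Q : Set X} (hQ : Q.Countable) (hQd : ∀ x y, x < y → ∃ q ∈ Q, x < q ∧ q < y)
    {α β : X} (hlt : α < β) (h : Comm F α β) (x y : X) : Comm F x y := by
  have hconv : ∀ a b p : X, Comm F a b → a ≤ p → p ≤ b → Comm F a p :=
    fun a b p h h1 h2 => hF.comm_of_mem_Icc hsup hQ hQd h h1 h2
  have key : ∀ z, ∃ q : Q, Comm F (F z α) q := by
    intro z
    obtain ⟨q, hq, h1, h2⟩ := hQd _ _ (hF.right z hlt)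
    exact ⟨⟨q, hq⟩, hconv _ _ _ (Comm.mul hF Comm.rfl h) h1.le h2.le⟩
  choose q hq using key
  have := hQ.to_subtype
  obtain ⟨ι, hι⟩ := exists_injective_nat Q
  have he : ∀ z w, ι (q z) = ι (q w) → Comm F z w := by
    intro z w hzw
    have h1 := hq z
    rw [hι hzw] at h1
    exact (h1.trans hF (hq w).symm).cancel_right hF
  rcases lt_trichotomy x y with hxy | rfl | hxy
  · exact hF.comm_of_countable hsup hconv _ he hxy
  · exact Comm.rfl
  · exact (hF.comm_of_countable hsup hconv _ he hxy).symm

end Bisym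

/-- Main theorem: If a reflexive, partially strictly increasing,
bisymmetric map on a proper interval is symmetric at one pair of distinct points,
then it is symmetric everywhere. -/
theorem stmt_11 (I : Set ℝ) (hI : I.OrdConnected)
    (hproper : ∃ x ∈ I, ∃ y ∈ I, x < y)
    (F : ℝ → ℝ → ℝ)
    (hmap : ∀ x ∈ I, ∀ y ∈ I, F x y ∈ I)
    (hrefl : ∀ x ∈ I, F x x = x)
    (hinc1 : ∀ y₀ ∈ I, StrictMonoOn (fun x => F x y₀) I)
    (hinc2 : ∀ x₀ ∈ I, StrictMonoOn (fun y => F x₀ y) I)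
    (hbisym : ∀ x ∈ I, ∀ y ∈ I, ∀ u ∈ I, ∀ v ∈ I,
      F (F x y) (F u v) = F (F x u) (F y v))
    (α β : ℝ) (hα : α ∈ I) (hβ : β ∈ I) (hαβ : α ≠ β)
    (hsympt : F α β = F β α) :
    ∀ x ∈ I, ∀ y ∈ I, F x y = F y x := by
  let G : I → I → I := fun x y => ⟨F x y, hmap x x.2 y y.2⟩
  have hG : Bisym G :=
    { refl := fun x => Subtype.ext (hrefl x x.2)
      left := fun y x x' h => hinc1 y y.2 x.2 x'.2 h
      right := fun x y y' h => hinc2 x x.2 y.2 y'.2 h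
      bisym := fun x y u v => Subtype.ext (hbisym x x.2 y y.2 u u.2 v v.2) }
  have hsup : ∀ S : Set I, S.Nonempty → BddAbove S → ∃ z, IsLUB S z := by
    rintro S ⟨s, hs⟩ ⟨b, hb⟩
    have hb' : (b : ℝ) ∈ upperBounds ((↑) '' S : Set ℝ) := by
      rintro _ ⟨x, hx, rfl⟩
      exact hb hx
    have hl := isLUB_csSup (⟨_, s, hs, rfl⟩ : ((↑) '' S : Set ℝ).Nonempty) ⟨_, hb'⟩
    refine ⟨⟨sSup ((↑) '' S), hI.out s.2 b.2 ⟨hl.1 ⟨s, hs, rfl⟩, hl.2 hb'⟩⟩, ?_, ?_⟩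
    · intro x hx
      exact hl.1 ⟨x, hx, rfl⟩
    · intro c hc
      have hc' : (c : ℝ) ∈ upperBounds ((↑) '' S : Set ℝ) := by
        rintro _ ⟨x, hx, rfl⟩
        exact hc hx
      exact hl.2 hc'
  have hQ : {x : I | (x : ℝ) ∈ Set.range ((↑) : ℚ → ℝ)}.Countable :=
    (Set.countable_range _).preimage Subtype.val_injective
  have hQd : ∀ x y : I, x < y → ∃ q ∈ {x : I | (x : ℝ) ∈ Set.range ((↑) : ℚ → ℝ)},
      x < q ∧ q < y := by
    intro x y hxy
    obtain ⟨q, h1, h2⟩ := exists_rat_btwn (show (x : ℝ) < y from hxy)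
    exact ⟨⟨q, hI.out x.2 y.2 ⟨h1.le, h2.le⟩⟩, ⟨q, rfl⟩, h1, h2⟩
  intro x hx y hy
  have main : Bisym.Comm G ⟨x, hx⟩ ⟨y, hy⟩ := by
    rcases lt_or_gt_of_ne hαβ with hlt | hlt
    · exact hG.comm_of_comm hsup hQ hQd (α := ⟨α, hα⟩) (β := ⟨β, hβ⟩) hlt
        (Subtype.ext hsympt) _ _
    · exact hG.comm_of_comm hsup hQ hQd (α := ⟨β, hβ⟩) (β := ⟨α, hα⟩) hlt
        (Subtype.ext hsympt.symm) _ _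
  exact congrArg Subtype.val main
end

section
/- Let I be a proper interval and F : I × I → I a reflexive, partially strictly increasing, bisymmetric map. Then either F(x,y) = F(y,x) for all x, y ∈ I, or F(x,y) ≠ F(y,x) for all x ≠ y in I (dichotomy of symmetry). -/
/-!
Write `xy` for `F x y` and call `x, y` *commuting* if `xy = yx`. Suppose `a < b` commute.

*The interval `[a, b]`.* Iterating `F` on `a, b` gives a dyadic grid `f n k` (`0 ≤ k ≤ 2 ^ n`), strictly
increasing in `k`, and bisymmetry together with `ab = ba` yields
`F (f n i) (f n j) = f (n + 1) (i + j)`. Reading off the dyadic position of a point defines a monotone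
map `φ : [a, b] → [0, 1]` that attains every value in `(0, 1)` and satisfies
`φ (F x y) = (φ x + φ y) / 2`. If `φ` took the same value at `x₀ < y₀`, then, choosing `z t` with `φ (z t) = t`, the intervals `(F x₀ (z t), F y₀ (z t))` would
be nonempty and, since `φ` is constantly `(φ x₀ + t) / 2` on each of them, pairwise disjoint. This is
impossible for uncountably many `t`. So `φ` is injective, and since `φ (xy) = φ (yx)`, all points of
`[a, b]` commute (`Bisym.comm_of_mem_Icc`).

*The rest of `I`.* If `u < v` do not commute, neighbouring points of the dyadic grid of `u, v` do not
commute either, by cancellation. The grid of `u, v` again gives points `z t` for `0 < t < 1`, and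
for `s < t` there are neighbouring grid points between `z s` and `z t`; by the first part, `z s` and
`z t` do not commute. The intervals `(F a (z t), F b (z t))` have commuting end points. If those
for `s < t` overlapped, then `F a (z s)` and `F a (z t)` would commute by the first part, and
hence so would `z s` and `z t`. So these intervals are pairwise disjoint, again a contradiction.
-/

/-! ### The dyadic grid of two points -/

/-- The standing hypotheses: `F` maps `I × I` to `I` and is reflexive, strictly increasing in each
variable and bisymmetric on `I`. -/
structure Bisym_s12 (I : Set ℝ) (F : ℝ → ℝ → ℝ) : Prop where
  ord : I.OrdConnected
  map : ∀ x ∈ I, ∀ y ∈ I, F x y ∈ I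
  refl : ∀ x ∈ I, F x x = x
  inc1 : ∀ y₀ ∈ I, StrictMonoOn (fun x => F x y₀) I
  inc2 : ∀ x₀ ∈ I, StrictMonoOn (fun y => F x₀ y) I
  bisym : ∀ x ∈ I, ∀ y ∈ I, ∀ u ∈ I, ∀ v ∈ I, F (F x y) (F u v) = F (F x u) (F y v)

/-- The dyadic grid generated by `a` and `b`: `dyad F a b n k` plays the role of
`a + (k / 2 ^ n) (b - a)` when `F` is the arithmetic mean. Only `k ≤ 2 ^ n` is meaningful. -/
noncomputable def dyad (F : ℝ → ℝ → ℝ) (a b : ℝ) : ℕ → ℕ → ℝ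
  | 0, k => if k = 0 then a else b
  | n + 1, k => if k % 2 = 0 then dyad F a b n (k / 2)
      else F (dyad F a b n (k / 2)) (dyad F a b n (k / 2 + 1))

section dyad

variable {I : Set ℝ} {F : ℝ → ℝ → ℝ} {a b : ℝ}

lemma dyad_even (n k : ℕ) : dyad F a b (n + 1) (2 * k) = dyad F a b n k := by
  simp [dyad]

lemma dyad_odd (n k : ℕ) :
    dyad F a b (n + 1) (2 * k + 1) = F (dyad F a b n k) (dyad F a b n (k + 1)) := by
  have h1 : (2 * k + 1) % 2 = 1 := by omega
  have h2 : (2 * k + 1) / 2 = k := by omega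
  simp [dyad, h1, h2]

lemma dyad_left (n : ℕ) : dyad F a b n 0 = a := by
  induction n with
  | zero => simp [dyad]
  | succ n ih => exact (dyad_even n 0).trans ih

lemma dyad_right (n : ℕ) : dyad F a b n (2 ^ n) = b := by
  induction n with
  | zero => simp [dyad]
  | succ n ih => rw [pow_succ', dyad_even, ih]

lemma dyad_shift (n m k : ℕ) : dyad F a b (n + m) (2 ^ m * k) = dyad F a b n k := by
  induction m with
  | zero => simp
  | succ m ih => rw [← add_assoc, pow_succ', mul_assoc, dyad_even, ih]

lemma Bisym_s12.lt_left (h : Bisym_s12 I F) {x y : ℝ} (hx : x ∈ I) (hy : y ∈ I) (hxy : x < y) :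
    x < F x y := by
  have := h.inc2 x hx hx hy hxy
  simpa [h.refl x hx] using this

lemma Bisym_s12.lt_right (h : Bisym_s12 I F) {x y : ℝ} (hx : x ∈ I) (hy : y ∈ I) (hxy : x < y) :
    F x y < y := by
  have := h.inc1 y hy hx hy hxy
  simpa [h.refl y hy] using this

lemma Bisym_s12.mono (h : Bisym_s12 I F) {x y x' y' : ℝ} (hx : x ∈ I) (hy : y ∈ I) (hx' : x' ∈ I)
    (hy' : y' ∈ I) (h1 : x ≤ x') (h2 : y ≤ y') : F x y ≤ F x' y' :=
  ((h.inc1 y hy).monotoneOn hx hx' h1).trans ((h.inc2 x' hx').monotoneOn hy hy' h2)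

lemma Bisym_s12.dyad_mem (h : Bisym_s12 I F) (ha : a ∈ I) (hb : b ∈ I) (n k : ℕ) :
    dyad F a b n k ∈ I := by
  induction n generalizing k with
  | zero => unfold dyad; split_ifs <;> assumption
  | succ n ih =>
    unfold dyad
    split_ifs
    · exact ih _
    · exact h.map _ (ih _) _ (ih _)

lemma Bisym_s12.dyad_lt_succ (h : Bisym_s12 I F) (ha : a ∈ I) (hb : b ∈ I) (hab : a < b) (n k : ℕ)
    (hk : k < 2 ^ n) : dyad F a b n k < dyad F a b n (k + 1) := by
  induction n generalizing k with
  | zero =>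
    obtain rfl : k = 0 := by simpa using hk
    simpa [dyad] using hab
  | succ n ih =>
    rw [pow_succ] at hk
    rcases Nat.even_or_odd' k with ⟨j, rfl | rfl⟩
    · rw [dyad_even, dyad_odd]
      exact h.lt_left (h.dyad_mem ha hb _ _) (h.dyad_mem ha hb _ _) (ih j (by omega))
    · rw [dyad_odd, show 2 * j + 1 + 1 = 2 * (j + 1) by ring, dyad_even]
      exact h.lt_right (h.dyad_mem ha hb _ _) (h.dyad_mem ha hb _ _) (ih j (by omega))

lemma Bisym_s12.dyad_lt (h : Bisym_s12 I F) (ha : a ∈ I) (hb : b ∈ I) (hab : a < b) (n : ℕ) {k j : ℕ}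
    (hkj : k < j) (hj : j ≤ 2 ^ n) : dyad F a b n k < dyad F a b n j := by
  induction j, hkj using Nat.le_induction with
  | base => exact h.dyad_lt_succ ha hb hab n k hj
  | succ j hkj ih =>
    exact (ih (by omega)).trans (h.dyad_lt_succ ha hb hab n j (by omega))

lemma Bisym_s12.dyad_le (h : Bisym_s12 I F) (ha : a ∈ I) (hb : b ∈ I) (hab : a < b) (n : ℕ) {k j : ℕ}
    (hkj : k ≤ j) (hj : j ≤ 2 ^ n) : dyad F a b n k ≤ dyad F a b n j := by
  rcases hkj.eq_or_lt with rfl | hlt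
  · rfl
  · exact (h.dyad_lt ha hb hab n hlt hj).le

/-- The order of grid points of different levels is that of the corresponding dyadic rationals. -/
lemma Bisym_s12.dyad_index_le (h : Bisym_s12 I F) (ha : a ∈ I) (hb : b ∈ I) (hab : a < b) {n k m j : ℕ}
    (hk : k ≤ 2 ^ n) (hle : dyad F a b n k ≤ dyad F a b m j) :
    (k : ℝ) / 2 ^ n ≤ (j : ℝ) / 2 ^ m := by
  rw [← dyad_shift n m k, ← dyad_shift m n j, add_comm m n] at hle
  have key : 2 ^ m * k ≤ 2 ^ n * j := by
    by_contra hcon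
    push Not at hcon
    refine absurd hle (not_le.2 (h.dyad_lt ha hb hab (n + m) hcon ?_))
    rw [pow_add, mul_comm (2 ^ n)]
    exact Nat.mul_le_mul_left _ hk
  rw [div_le_div_iff₀ (by positivity) (by positivity)]
  have : ((2 ^ m * k : ℕ) : ℝ) ≤ ((2 ^ n * j : ℕ) : ℝ) := by exact_mod_cast key
  push_cast at this
  linarith

lemma Bisym_s12.dyad_index_le' (h : Bisym_s12 I F) (ha : a ∈ I) (hb : b ∈ I) (hab : a < b) {n k m j : ℕ}
    (hj : j ≤ 2 ^ m) (hle : (k : ℝ) / 2 ^ n ≤ (j : ℝ) / 2 ^ m) :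
    dyad F a b n k ≤ dyad F a b m j := by
  rw [← dyad_shift n m k, ← dyad_shift m n j, add_comm m n]
  rw [div_le_div_iff₀ (by positivity) (by positivity)] at hle
  have key : 2 ^ m * k ≤ 2 ^ n * j := by
    have : ((2 ^ m * k : ℕ) : ℝ) ≤ ((2 ^ n * j : ℕ) : ℝ) := by push_cast; linarith
    exact_mod_cast this
  refine h.dyad_le ha hb hab (n + m) key ?_
  rw [pow_add]
  exact Nat.mul_le_mul_left _ hj

/-- Every point of `[a, b]` lies in some cell of the `n`-th grid. -/
lemma exists_cell (n : ℕ) {x : ℝ} (hx : x ∈ Set.Icc a b) :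
    ∃ k < 2 ^ n, dyad F a b n k ≤ x ∧ x ≤ dyad F a b n (k + 1) := by
  by_contra hcon
  push Not at hcon
  have key : ∀ k ≤ 2 ^ n, dyad F a b n k ≤ x := by
    intro k
    induction k with
    | zero => intro _; rw [dyad_left]; exact hx.1
    | succ k ih => intro hk; exact (hcon k (by omega) (ih (by omega))).le
  have hpos : 0 < 2 ^ n := by positivity
  have := hcon (2 ^ n - 1) (by omega) (key _ (by omega))
  rw [Nat.sub_add_cancel hpos, dyad_right] at this
  exact absurd hx.2 (not_le.2 this)

/-! ### Dyadic positions -/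

/-- The dyadic position of `x` in the grid generated by `a` and `b`. -/
noncomputable def pos (F : ℝ → ℝ → ℝ) (a b x : ℝ) : ℝ :=
  sSup {r | ∃ n k : ℕ, k ≤ 2 ^ n ∧ dyad F a b n k ≤ x ∧ r = (k : ℝ) / 2 ^ n}

lemma le_pos {n k : ℕ} {x : ℝ} (hk : k ≤ 2 ^ n) (hx : dyad F a b n k ≤ x) :
    (k : ℝ) / 2 ^ n ≤ pos F a b x := by
  refine le_csSup ⟨1, ?_⟩ ⟨n, k, hk, hx, rfl⟩
  rintro r ⟨m, j, hj, -, rfl⟩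
  rw [div_le_one (by positivity)]
  exact_mod_cast hj

lemma Bisym_s12.pos_le (h : Bisym_s12 I F) (ha : a ∈ I) (hb : b ∈ I) (hab : a < b) {n k : ℕ} {x : ℝ}
    (hx : x ≤ dyad F a b n k) : pos F a b x ≤ (k : ℝ) / 2 ^ n := by
  refine Real.sSup_le ?_ (by positivity)
  rintro r ⟨m, j, hj, hjx, rfl⟩
  exact h.dyad_index_le ha hb hab hj (hjx.trans hx)

lemma pos_mono {x y : ℝ} (hx : a ≤ x) (hxy : x ≤ y) : pos F a b x ≤ pos F a b y := by
  refine csSup_le ⟨_, 0, 0, by simp, by simpa [dyad] using hx, rfl⟩ ?_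
  rintro r ⟨m, j, hj, hjx, rfl⟩
  exact le_pos hj (hjx.trans hxy)

lemma exists_half_pow_lt {ε : ℝ} (hε : 0 < ε) : ∃ n : ℕ, 1 / (2 : ℝ) ^ n < ε := by
  obtain ⟨n, hn⟩ := exists_pow_lt_of_lt_one hε (show (1 / 2 : ℝ) < 1 by norm_num)
  exact ⟨n, by simpa using hn⟩

lemma eq_of_forall_abs_le {s t : ℝ} (H : ∀ n : ℕ, |s - t| ≤ 1 / 2 ^ n) : s = t := by
  by_contra hne
  obtain ⟨n, hn⟩ := exists_half_pow_lt (abs_pos.2 (sub_ne_zero.2 hne))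
  exact absurd (H n) (not_le.2 hn)

/-- By completeness of `ℝ`, `pos F a b` attains every value in `(0, 1)` on `[a, b]`. -/
lemma Bisym_s12.exists_pos_eq (h : Bisym_s12 I F) (ha : a ∈ I) (hb : b ∈ I) (hab : a < b) {t : ℝ}
    (ht : t ∈ Set.Ioo (0 : ℝ) 1) : ∃ z ∈ Set.Icc a b, pos F a b z = t := by
  set S : Set ℝ := {y | ∃ n k : ℕ, k ≤ 2 ^ n ∧ (k : ℝ) / 2 ^ n ≤ t ∧ y = dyad F a b n k} with hS
  have hub : ∀ m j : ℕ, j ≤ 2 ^ m → t ≤ (j : ℝ) / 2 ^ m → dyad F a b m j ∈ upperBounds S := by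
    rintro m j hj htj y ⟨n, k, hk, hkt, rfl⟩
    exact h.dyad_index_le' ha hb hab hj (hkt.trans htj)
  have hbdd : BddAbove S := ⟨_, hub 0 1 (by simp) (by simpa using ht.2.le)⟩
  have haS : a ∈ S := ⟨0, 0, by simp, by simpa using ht.1.le, by simp [dyad]⟩
  refine ⟨sSup S, ⟨le_csSup hbdd haS, csSup_le ⟨a, haS⟩ ?_⟩, eq_of_forall_abs_le fun n => ?_⟩
  · intro y hy
    simpa [dyad] using hub 0 1 (by simp) (by simpa using ht.2.le) hy
  · have h2 : (0 : ℝ) < 2 ^ n := by positivity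
    have hk0 : 0 ≤ t * 2 ^ n := mul_nonneg ht.1.le h2.le
    have hk1 := Nat.floor_le hk0
    have hk2 := Nat.lt_floor_add_one (t * 2 ^ n)
    set k := ⌊t * 2 ^ n⌋₊
    have hk : k + 1 ≤ 2 ^ n := by
      have : (k : ℝ) < (2 ^ n : ℕ) := by
        push_cast
        nlinarith [ht.2]
      exact_mod_cast this
    have e1 : (k : ℝ) / 2 ^ n ≤ t := by rwa [div_le_iff₀ h2]
    have e2 : t ≤ ((k + 1 : ℕ) : ℝ) / 2 ^ n := by
      rw [le_div_iff₀ h2]; push_cast; exact hk2.le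
    have l1 := le_pos (x := sSup S) (by omega) (le_csSup hbdd ⟨n, k, by omega, e1, rfl⟩)
    have l2 := h.pos_le ha hb hab (csSup_le ⟨a, haS⟩ (hub n (k + 1) hk e2))
    push_cast at l2 e2
    rw [add_div] at l2 e2
    rw [abs_le]
    constructor <;> linarith

/-- Points of different position are separated by two neighbouring grid points. -/
lemma Bisym_s12.exists_between (h : Bisym_s12 I F) (ha : a ∈ I) (hb : b ∈ I) (hab : a < b) {x y : ℝ}
    (hx : x ∈ Set.Icc a b) (hy : y ∈ Set.Icc a b) (hxy : pos F a b x < pos F a b y) :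
    ∃ n k : ℕ, k < 2 ^ n ∧ x ≤ dyad F a b n k ∧ dyad F a b n (k + 1) ≤ y := by
  obtain ⟨n, hn⟩ := exists_half_pow_lt (show 0 < (pos F a b y - pos F a b x) / 3 by linarith)
  obtain ⟨k, hk, hk1, hk2⟩ := exists_cell (F := F) n hx
  obtain ⟨j, hj, hj1, hj2⟩ := exists_cell (F := F) n hy
  have l1 := le_pos (by omega) hk1
  have l2 := h.pos_le ha hb hab hj2
  have h2 : (0 : ℝ) < 2 ^ n := by positivity
  have hkj : k + 2 ≤ j := by
    by_contra hcon
    have : ((j + 1 : ℕ) : ℝ) ≤ (k : ℝ) + 2 := by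
      have : j + 1 ≤ k + 2 := by omega
      exact_mod_cast this
    have := div_le_div_of_nonneg_right this h2.le
    rw [add_div, show (2 : ℝ) / 2 ^ n = 2 * (1 / 2 ^ n) by ring] at this
    linarith
  exact ⟨n, k + 1, by omega, hk2, (h.dyad_le ha hb hab n hkj (by omega)).trans hj1⟩

/-! ### The mean value law for commuting generators -/

/-- If the generators commute, `F` acts on the grid as the arithmetic mean of positions. -/
lemma Bisym_s12.dyad_add (h : Bisym_s12 I F) (ha : a ∈ I) (hb : b ∈ I) (hc : F a b = F b a) (n i j : ℕ)
    (hi : i ≤ 2 ^ n) (hj : j ≤ 2 ^ n) :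
    F (dyad F a b n i) (dyad F a b n j) = dyad F a b (n + 1) (i + j) := by
  induction n generalizing i j with
  | zero =>
    simp only [pow_zero] at hi hj
    have ra := h.refl a ha
    have rb := h.refl b hb
    interval_cases i <;> interval_cases j <;> simp [dyad, ra, rb, hc]
  | succ n ih =>
    rw [pow_succ] at hi hj
    have M := h.dyad_mem ha hb n
    rcases Nat.even_or_odd' i with ⟨i, rfl | rfl⟩ <;>
      rcases Nat.even_or_odd' j with ⟨j, rfl | rfl⟩
    · rw [dyad_even, dyad_even, ← mul_add, dyad_even, ih i j (by omega) (by omega)]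
    · rw [dyad_even, dyad_odd, show 2 * i + (2 * j + 1) = 2 * (i + j) + 1 by ring, dyad_odd]
      nth_rw 1 [← h.refl _ (M i)]
      rw [h.bisym _ (M _) _ (M _) _ (M _) _ (M _), ih i j (by omega) (by omega),
        ih i (j + 1) (by omega) (by omega), ← add_assoc]
    · rw [dyad_even, dyad_odd, show 2 * i + 1 + 2 * j = 2 * (i + j) + 1 by ring, dyad_odd]
      nth_rw 1 [← h.refl _ (M j)]
      rw [h.bisym _ (M _) _ (M _) _ (M _) _ (M _), ih i j (by omega) (by omega),
        ih (i + 1) j (by omega) (by omega), show i + 1 + j = i + j + 1 by ring]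
    · rw [dyad_odd, dyad_odd, show 2 * i + 1 + (2 * j + 1) = 2 * (i + j + 1) by ring, dyad_even]
      -- Swapping the two neighbours on the right makes both regrouped pairs have index sum `i + j + 1`.
      have hs : F (dyad F a b n j) (dyad F a b n (j + 1))
          = F (dyad F a b n (j + 1)) (dyad F a b n j) := by
        rw [ih j (j + 1) (by omega) (by omega), ih (j + 1) j (by omega) (by omega), add_comm j]
      rw [hs, h.bisym _ (M _) _ (M _) _ (M _) _ (M _), ih i (j + 1) (by omega) (by omega),
        ih (i + 1) j (by omega) (by omega), show i + 1 + j = i + j + 1 by ring, ← add_assoc,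
        h.refl _ (h.dyad_mem ha hb _ _)]

lemma Bisym_s12.map_Icc (h : Bisym_s12 I F) (ha : a ∈ I) (hb : b ∈ I) {x y : ℝ}
    (hx : x ∈ Set.Icc a b) (hy : y ∈ Set.Icc a b) : F x y ∈ Set.Icc a b := by
  have hxI := h.ord.out ha hb hx
  have hyI := h.ord.out ha hb hy
  constructor
  · simpa [h.refl a ha] using h.mono ha ha hxI hyI hx.1 hy.1
  · simpa [h.refl b hb] using h.mono hxI hyI hb hb hx.2 hy.2

lemma Bisym_s12.pos_F (h : Bisym_s12 I F) (ha : a ∈ I) (hb : b ∈ I) (hab : a < b) (hc : F a b = F b a)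
    {x y : ℝ} (hx : x ∈ Set.Icc a b) (hy : y ∈ Set.Icc a b) :
    pos F a b (F x y) = (pos F a b x + pos F a b y) / 2 := by
  refine eq_of_forall_abs_le fun n => ?_
  obtain ⟨k, hk, hk1, hk2⟩ := exists_cell (F := F) n hx
  obtain ⟨j, hj, hj1, hj2⟩ := exists_cell (F := F) n hy
  have hxI := h.ord.out ha hb hx
  have hyI := h.ord.out ha hb hy
  have M := h.dyad_mem ha hb n
  have u1 := h.mono (M k) (M j) hxI hyI hk1 hj1
  have u2 := h.mono hxI hyI (M _) (M _) hk2 hj2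
  rw [h.dyad_add ha hb hc n _ _ (by omega) (by omega)] at u1 u2
  have p1 := le_pos (by rw [pow_succ]; omega) u1
  have p2 := h.pos_le ha hb hab u2
  have p3 := le_pos (by omega) hk1
  have p4 := h.pos_le ha hb hab hk2
  have p5 := le_pos (by omega) hj1
  have p6 := h.pos_le ha hb hab hj2
  have e1 : ((k + j : ℕ) : ℝ) / 2 ^ (n + 1) = ((k : ℝ) / 2 ^ n + (j : ℝ) / 2 ^ n) / 2 := by
    push_cast; field_simp; ring
  have e2 : ((k + 1 + (j + 1) : ℕ) : ℝ) / 2 ^ (n + 1)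
      = ((k : ℝ) / 2 ^ n + (j : ℝ) / 2 ^ n) / 2 + 1 / 2 ^ n := by
    push_cast; field_simp; ring
  rw [e1] at p1
  rw [e2] at p2
  push_cast at p4 p6
  rw [add_div] at p4 p6
  rw [abs_le]
  constructor <;> linarith

end dyad

/-! ### Spreading commutativity -/

/-- There is no uncountable family of pairwise disjoint nonempty open intervals. -/
lemma no_uncountable_intervals (l r : ℝ → ℝ) (hlr : ∀ t ∈ Set.Ioo (0 : ℝ) 1, l t < r t)
    (hd : ∀ s ∈ Set.Ioo (0 : ℝ) 1, ∀ t ∈ Set.Ioo (0 : ℝ) 1, s < t → r s ≤ l t) : False := by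
  choose! q hq using fun t ht => exists_rat_btwn (hlr t ht)
  have hlt : ∀ s ∈ Set.Ioo (0 : ℝ) 1, ∀ t ∈ Set.Ioo (0 : ℝ) 1, s < t → q s < q t := by
    intro s hs t ht hst
    have := ((hq s hs).2.trans_le (hd s hs t ht hst)).trans (hq t ht).1
    exact_mod_cast this
  have hmono : StrictMonoOn q (Set.Ioo (0 : ℝ) 1) := fun s hs t ht hst => hlt s hs t ht hst
  have hcount : (Set.Ioo (0 : ℝ) 1).Countable :=
    Set.MapsTo.countable_of_injOn (Set.mapsTo_univ q _) hmono.injOn Set.countable_univ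
  exact absurd hcount (Cardinal.Real.Ioo_countable_iff.not.2 (by norm_num))

section main

variable {I : Set ℝ} {F : ℝ → ℝ → ℝ} {a b : ℝ}

lemma Bisym_s12.pos_strictMono (h : Bisym_s12 I F) (ha : a ∈ I) (hb : b ∈ I) (hab : a < b)
    (hc : F a b = F b a) {x y : ℝ} (hx : x ∈ Set.Icc a b) (hy : y ∈ Set.Icc a b) (hxy : x < y) :
    pos F a b x < pos F a b y := by
  refine lt_of_le_of_ne (pos_mono hx.1 hxy.le) fun heq => ?_
  choose! z hz hpz using fun t (ht : t ∈ Set.Ioo (0 : ℝ) 1) => h.exists_pos_eq ha hb hab ht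
  refine no_uncountable_intervals (fun t => F x (z t)) (fun t => F y (z t)) ?_ ?_
  · intro t ht
    exact h.inc1 _ (h.ord.out ha hb (hz t ht)) (h.ord.out ha hb hx) (h.ord.out ha hb hy) hxy
  · intro s hs t ht hst
    by_contra hcon
    push Not at hcon
    have := pos_mono (F := F) (b := b) (h.map_Icc ha hb hx (hz t ht)).1 hcon.le
    rw [h.pos_F ha hb hab hc hx (hz t ht), h.pos_F ha hb hab hc hy (hz s hs), hpz t ht,
      hpz s hs] at this
    linarith

lemma Bisym_s12.comm_of_mem_Icc (h : Bisym_s12 I F) (ha : a ∈ I) (hb : b ∈ I) (hab : a < b)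
    (hc : F a b = F b a) {x y : ℝ} (hx : x ∈ Set.Icc a b) (hy : y ∈ Set.Icc a b) :
    F x y = F y x := by
  have hmono : StrictMonoOn (pos F a b) (Set.Icc a b) :=
    fun u hu v hv huv => h.pos_strictMono ha hb hab hc hu hv huv
  refine hmono.injOn (h.map_Icc ha hb hx hy) (h.map_Icc ha hb hy hx) ?_
  rw [h.pos_F ha hb hab hc hx hy, h.pos_F ha hb hab hc hy hx, add_comm]

lemma Bisym_s12.comm_mul (h : Bisym_s12 I F) {x y u v : ℝ} (hx : x ∈ I) (hy : y ∈ I) (hu : u ∈ I)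
    (hv : v ∈ I) (h1 : F x y = F y x) (h2 : F u v = F v u) :
    F (F x u) (F y v) = F (F y v) (F x u) := by
  rw [h.bisym x hx u hu y hy v hv, h.bisym y hy v hv x hx u hu, h1, h2]

lemma Bisym_s12.comm_cancel_left (h : Bisym_s12 I F) {c u v : ℝ} (hc : c ∈ I) (hu : u ∈ I) (hv : v ∈ I)
    (heq : F (F c u) (F c v) = F (F c v) (F c u)) : F u v = F v u := by
  rw [h.bisym c hc u hu c hc v hv, h.bisym c hc v hv c hc u hu, h.refl c hc] at heq
  exact (h.inc2 c hc).injOn (h.map _ hu _ hv) (h.map _ hv _ hu) heq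

lemma Bisym_s12.comm_cancel_right (h : Bisym_s12 I F) {c u v : ℝ} (hc : c ∈ I) (hu : u ∈ I) (hv : v ∈ I)
    (heq : F (F u c) (F v c) = F (F v c) (F u c)) : F u v = F v u := by
  rw [h.bisym u hu c hc v hv c hc, h.bisym v hv c hc u hu c hc, h.refl c hc] at heq
  exact (h.inc1 c hc).injOn (h.map _ hu _ hv) (h.map _ hv _ hu) heq

/-- Neighbouring grid points of a non-commuting pair do not commute. -/
lemma Bisym_s12.dyad_not_comm (h : Bisym_s12 I F) {u v : ℝ} (hu : u ∈ I) (hv : v ∈ I)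
    (hne : F u v ≠ F v u) (n k : ℕ) (hk : k < 2 ^ n) :
    F (dyad F u v n k) (dyad F u v n (k + 1)) ≠ F (dyad F u v n (k + 1)) (dyad F u v n k) := by
  induction n generalizing k with
  | zero =>
    obtain rfl : k = 0 := by simpa using hk
    simpa [dyad] using hne
  | succ n ih =>
    rw [pow_succ] at hk
    have M := h.dyad_mem hu hv n
    rcases Nat.even_or_odd' k with ⟨j, rfl | rfl⟩
    · rw [dyad_even, dyad_odd]
      intro heq
      refine ih j (by omega) (h.comm_cancel_left (M j) (M j) (M (j + 1)) ?_)
      rwa [h.refl _ (M j)]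
    · rw [dyad_odd, show 2 * j + 1 + 1 = 2 * (j + 1) by ring, dyad_even]
      intro heq
      refine ih j (by omega) (h.comm_cancel_right (M (j + 1)) (M j) (M (j + 1)) ?_)
      rwa [h.refl _ (M (j + 1))]

/-- One commuting pair of distinct points forces all pairs to commute. -/
lemma Bisym_s12.comm_of_comm (h : Bisym_s12 I F) (ha : a ∈ I) (hb : b ∈ I) (hab : a < b)
    (hc : F a b = F b a) {u v : ℝ} (hu : u ∈ I) (hv : v ∈ I) (huv : u < v) : F u v = F v u := by
  by_contra hne
  choose! z hz hpz using fun t (ht : t ∈ Set.Ioo (0 : ℝ) 1) => h.exists_pos_eq hu hv huv ht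
  have hzI : ∀ t ∈ Set.Ioo (0 : ℝ) 1, z t ∈ I := fun t ht => h.ord.out hu hv (hz t ht)
  have hzlt : ∀ s ∈ Set.Ioo (0 : ℝ) 1, ∀ t ∈ Set.Ioo (0 : ℝ) 1, s < t →
      z s < z t ∧ F (z s) (z t) ≠ F (z t) (z s) := by
    intro s hs t ht hst
    obtain ⟨n, k, hk, h1, h2⟩ := h.exists_between hu hv huv (hz s hs) (hz t ht)
      (by rwa [hpz s hs, hpz t ht])
    have hlt := h.dyad_lt_succ hu hv huv n k hk
    have hst' : z s < z t := h1.trans_lt (hlt.trans_le h2)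
    refine ⟨hst', fun heq => h.dyad_not_comm hu hv hne n k hk ?_⟩
    exact h.comm_of_mem_Icc (hzI s hs) (hzI t ht) hst' heq ⟨h1, hlt.le.trans h2⟩
      ⟨h1.trans hlt.le, h2⟩
  refine no_uncountable_intervals (fun t => F a (z t)) (fun t => F b (z t)) ?_ ?_
  · intro t ht
    exact h.inc1 _ (hzI t ht) ha hb hab
  · intro s hs t ht hst
    by_contra hcon
    push Not at hcon
    obtain ⟨hlt, hnc⟩ := hzlt s hs t ht hst
    have hsI := hzI s hs
    have hl : F a (z s) < F b (z s) := h.inc1 _ hsI ha hb hab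
    have hm : F a (z s) < F a (z t) := h.inc2 a ha hsI (hzI t ht) hlt
    refine hnc (h.comm_cancel_left ha hsI (hzI t ht) ?_)
    exact h.comm_of_mem_Icc (h.map _ ha _ hsI) (h.map _ hb _ hsI) hl
      (h.comm_mul ha hb hsI hsI hc rfl) ⟨le_rfl, hl.le⟩ ⟨hm.le, hcon.le⟩

end main

/-- Dichotomy: A reflexive, partially strictly increasing, bisymmetric
map on a proper interval is either symmetric everywhere or nowhere symmetric. -/
theorem stmt_12 (I : Set ℝ) (hI : I.OrdConnected)
    (hproper : ∃ x ∈ I, ∃ y ∈ I, x < y)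
    (F : ℝ → ℝ → ℝ)
    (hmap : ∀ x ∈ I, ∀ y ∈ I, F x y ∈ I)
    (hrefl : ∀ x ∈ I, F x x = x)
    (hinc1 : ∀ y₀ ∈ I, StrictMonoOn (fun x => F x y₀) I)
    (hinc2 : ∀ x₀ ∈ I, StrictMonoOn (fun y => F x₀ y) I)
    (hbisym : ∀ x ∈ I, ∀ y ∈ I, ∀ u ∈ I, ∀ v ∈ I,
      F (F x y) (F u v) = F (F x u) (F y v)) :
    (∀ x ∈ I, ∀ y ∈ I, F x y = F y x) ∨
    (∀ x ∈ I, ∀ y ∈ I, x ≠ y → F x y ≠ F y x) := by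
  have h : Bisym_s12 I F := ⟨hI, hmap, hrefl, hinc1, hinc2, hbisym⟩
  by_cases hex : ∃ a ∈ I, ∃ b ∈ I, a < b ∧ F a b = F b a
  · obtain ⟨a, ha, b, hb, hab, hc⟩ := hex
    left
    intro x hx y hy
    rcases lt_trichotomy x y with hlt | rfl | hlt
    · exact h.comm_of_comm ha hb hab hc hx hy hlt
    · rfl
    · exact (h.comm_of_comm ha hb hab hc hy hx hlt).symm
  · right
    intro x hx y hy hxy heq
    rcases hxy.lt_or_gt with hlt | hlt
    · exact hex ⟨x, hx, y, hy, hlt, heq⟩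
    · exact hex ⟨y, hy, x, hx, hlt, heq.symm⟩
end

section
/- Let F : I × I → I be bisymmetric, partially strictly increasing, and reflexive, and let the equivalence classes of the relation a ∼ b ⟺ F(a,b) = F(b,a) be intervals (which they provably are). Then each equivalence class is a closed interval: if A is an equivalence class with infimum a and supremum b belonging to I, then a ∈ A and b ∈ A. -/
/-!
Write `xy` for `F x y`. If a class `A` missed `b = sup A`, then `F a b` and `F b a` would differ
for some `a ∈ A`, and bisymmetry would force a gap in the values on `A` that the dyadic
combinations of two points of `A` cannot have.

Dyadic combinations. If `a < x` commute, then `dyadic F a x n k`, the would-be point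
`(1 - k/2^n) a + (k/2^n) x`, is strictly increasing in `k ≤ 2^n`, and bisymmetry gives
`F (dyadic n i) (dyadic n j) = dyadic (n+1) (i+j)` (`dyadic_mul`).

They leave no gap (`exists_dyadic_between`). Extend `k/2^n ↦ dyadic n k` to a monotone `φ` on
`[0, 1]`. If some `X < Y` in `[a, x]` contained no two consecutive dyadic points of any level, then
`X` and `Y` would be at most two dyadic steps apart at each level, so for `r < r'` some level gives
`F Y (φ r) ≤ F X (φ r')`. The intervals `(F X (φ r), F Y (φ r))` would then be uncountably many
nonempty disjoint open intervals. No continuity of `F` is used.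

Closedness (`comm_not_lt`). Let points `u < b` commuting with `a` accumulate at `b`, and suppose
`ab < ba =: c`. With `s = sup (ua)`, taken over those `u`, we have `s ≤ ab < c < b`, and
`c(ua) = (bu)(aa) = (bu)a ≤ s` since `bu < b`. But dyadic points between `s` and `c`
yield a dyadic `e < s` and a dyadic `d ≤ c` with `ed ≥ s`, so that `c(ua) > s` as soon as `e < ua`.
Passing to `(x, y) ↦ F y x` excludes `ba < ab`, and conjugating by `x ↦ -x` turns infima into
suprema.
-/

/-- `F` is a reflexive, bisymmetric, partially strictly increasing operation on `[p, q]`. -/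
structure BisymMean (p q : ℝ) (F : ℝ → ℝ → ℝ) : Prop where
  map : ∀ x ∈ Set.Icc p q, ∀ y ∈ Set.Icc p q, F x y ∈ Set.Icc p q
  idem : ∀ x ∈ Set.Icc p q, F x x = x
  inc1 : ∀ y₀ ∈ Set.Icc p q, StrictMonoOn (fun x => F x y₀) (Set.Icc p q)
  inc2 : ∀ x₀ ∈ Set.Icc p q, StrictMonoOn (fun y => F x₀ y) (Set.Icc p q)
  bisym : ∀ x ∈ Set.Icc p q, ∀ y ∈ Set.Icc p q, ∀ u ∈ Set.Icc p q,
      ∀ v ∈ Set.Icc p q, F (F x y) (F u v) = F (F x u) (F y v)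

/-- The dyadic combination of `a` and `x` with weight `k / 2^n` on `x`, meaningful for `k ≤ 2^n`.
An even `k` gives back level `n - 1` by reflexivity, an odd one the mean of two neighbours. -/
def dyadic (F : ℝ → ℝ → ℝ) (a x : ℝ) : ℕ → ℕ → ℝ
  | 0, k => if k = 0 then a else x
  | n + 1, k => F (dyadic F a x n (k / 2)) (dyadic F a x n ((k + 1) / 2))

namespace BisymMean

variable {p q : ℝ} {F : ℝ → ℝ → ℝ}

theorem mono (h : BisymMean p q F) {x x' y y' : ℝ} (hx : x ∈ Set.Icc p q) (hx' : x' ∈ Set.Icc p q)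
    (hy : y ∈ Set.Icc p q) (hy' : y' ∈ Set.Icc p q) (h1 : x ≤ x') (h2 : y ≤ y') :
    F x y ≤ F x' y' :=
  ((h.inc1 y hy).monotoneOn hx hx' h1).trans ((h.inc2 x' hx').monotoneOn hy hy' h2)

theorem lt_left (h : BisymMean p q F) {x x' y : ℝ} (hx : x ∈ Set.Icc p q) (hx' : x' ∈ Set.Icc p q)
    (hy : y ∈ Set.Icc p q) (h1 : x < x') : F x y < F x' y := h.inc1 y hy hx hx' h1

theorem lt_right (h : BisymMean p q F) {x y y' : ℝ} (hx : x ∈ Set.Icc p q) (hy : y ∈ Set.Icc p q)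
    (hy' : y' ∈ Set.Icc p q) (h1 : y < y') : F x y < F x y' := h.inc2 x hx hy hy' h1

theorem swap (h : BisymMean p q F) : BisymMean p q (fun x y => F y x) where
  map x hx y hy := h.map y hy x hx
  idem := h.idem
  inc1 := h.inc2
  inc2 := h.inc1
  bisym x hx y hy u hu v hv := h.bisym v hv u hu y hy x hx

theorem neg (h : BisymMean p q F) : BisymMean (-q) (-p) (fun x y => -F (-x) (-y)) := by
  have m : ∀ {x : ℝ}, x ∈ Set.Icc (-q) (-p) → -x ∈ Set.Icc p q := fun {x} hx =>
    ⟨by linarith [hx.2], by linarith [hx.1]⟩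
  refine ⟨?_, ?_, ?_, ?_, ?_⟩
  · intro x hx y hy
    have := h.map _ (m hx) _ (m hy)
    exact ⟨by linarith [this.2], by linarith [this.1]⟩
  · intro x hx
    simp [h.idem _ (m hx)]
  · intro y hy x hx x' hx' hlt
    have := h.lt_left (m hx') (m hx) (m hy) (neg_lt_neg hlt)
    simpa using this
  · intro y hy x hx x' hx' hlt
    have := h.lt_right (m hy) (m hx') (m hx) (neg_lt_neg hlt)
    simpa using this
  · intro x hx y hy u hu v hv
    simpa using h.bisym _ (m hx) _ (m hy) _ (m hu) _ (m hv)

section Dyadic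

variable {a x : ℝ}

theorem dyadic_mem (h : BisymMean p q F) (ha : a ∈ Set.Icc p q) (hx : x ∈ Set.Icc p q) :
    ∀ n k, dyadic F a x n k ∈ Set.Icc p q := by
  intro n
  induction n with
  | zero => intro k; unfold dyadic; split_ifs <;> assumption
  | succ n ih => intro k; exact h.map _ (ih _) _ (ih _)

theorem dyadic_double (h : BisymMean p q F) (ha : a ∈ Set.Icc p q) (hx : x ∈ Set.Icc p q)
    (n k : ℕ) : dyadic F a x (n + 1) (2 * k) = dyadic F a x n k := by
  have h1 : 2 * k / 2 = k := by omega
  have h2 : (2 * k + 1) / 2 = k := by omega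
  rw [dyadic, h1, h2, h.idem _ (h.dyadic_mem ha hx n k)]

theorem dyadic_odd (n k : ℕ) : dyadic F a x (n + 1) (2 * k + 1)
    = F (dyadic F a x n k) (dyadic F a x n (k + 1)) := by
  have h1 : (2 * k + 1) / 2 = k := by omega
  have h2 : (2 * k + 1 + 1) / 2 = k + 1 := by omega
  rw [dyadic, h1, h2]

theorem dyadic_level (h : BisymMean p q F) (ha : a ∈ Set.Icc p q) (hx : x ∈ Set.Icc p q)
    (n k m : ℕ) : dyadic F a x (n + m) (2 ^ m * k) = dyadic F a x n k := by
  induction m with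
  | zero => simp
  | succ m ih =>
    rw [← ih, ← add_assoc, pow_succ, mul_comm _ 2, mul_assoc, h.dyadic_double ha hx]

theorem dyadic_zero (h : BisymMean p q F) (ha : a ∈ Set.Icc p q) (hx : x ∈ Set.Icc p q) (n : ℕ) :
    dyadic F a x n 0 = a := by
  simpa [dyadic] using h.dyadic_level ha hx 0 0 n

theorem dyadic_top (h : BisymMean p q F) (ha : a ∈ Set.Icc p q) (hx : x ∈ Set.Icc p q) (n : ℕ) :
    dyadic F a x n (2 ^ n) = x := by
  simpa [dyadic] using h.dyadic_level ha hx 0 1 n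

/-- Dyadic points of one level commute, and their mean depends only on the sum of the indices. -/
theorem dyadic_mul (h : BisymMean p q F) (ha : a ∈ Set.Icc p q) (hx : x ∈ Set.Icc p q)
    (hc : F a x = F x a) : ∀ n i j, i ≤ 2 ^ n → j ≤ 2 ^ n →
    F (dyadic F a x n i) (dyadic F a x n j) = dyadic F a x (n + 1) (i + j) := by
  intro n
  induction n with
  | zero =>
    intro i j hi hj
    have hi' : i = 0 ∨ i = 1 := by simp at hi; omega
    have hj' : j = 0 ∨ j = 1 := by simp at hj; omega
    rcases hi' with rfl | rfl <;> rcases hj' with rfl | rfl <;> simp [dyadic, hc]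
  | succ n ih =>
    intro i j hi hj
    have m := h.dyadic_mem ha hx n
    rw [pow_succ] at hi hj
    obtain ⟨i, rfl | rfl⟩ := Nat.even_or_odd' i <;> obtain ⟨j, rfl | rfl⟩ := Nat.even_or_odd' j
    · rw [h.dyadic_double ha hx, h.dyadic_double ha hx, ← mul_add, h.dyadic_double ha hx,
        ih _ _ (by omega) (by omega)]
    · rw [h.dyadic_double ha hx, dyadic_odd, ← add_assoc, ← mul_add, dyadic_odd, add_assoc,
        ← ih i j (by omega) (by omega), ← ih i (j + 1) (by omega) (by omega),
        ← h.bisym _ (m _) _ (m _) _ (m _) _ (m _), h.idem _ (m i)]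
    · have e : 2 * i + 1 + 2 * j = 2 * (i + j) + 1 := by ring
      have e2 : i + j + 1 = i + 1 + j := by ring
      rw [h.dyadic_double ha hx, dyadic_odd, e, dyadic_odd, e2, ← ih i j (by omega) (by omega), ← ih (i + 1) j (by omega) (by omega),
        ← h.bisym _ (m _) _ (m _) _ (m _) _ (m _), h.idem _ (m j)]
    · have e : 2 * i + 1 + (2 * j + 1) = 2 * (i + (j + 1)) := by ring
      have e2 : i + 1 + j = i + (j + 1) := by ring
      have hcomm : F (dyadic F a x n j) (dyadic F a x n (j + 1))
          = F (dyadic F a x n (j + 1)) (dyadic F a x n j) := by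
        rw [ih _ _ (by omega) (by omega), ih _ _ (by omega) (by omega), add_comm j]
      rw [dyadic_odd, dyadic_odd, e, h.dyadic_double ha hx, hcomm,
        h.bisym _ (m _) _ (m _) _ (m _) _ (m _), ih _ _ (by omega) (by omega),
        ih _ _ (by omega) (by omega), e2, h.idem _ (h.dyadic_mem ha hx _ _)]

theorem dyadic_lt_succ (h : BisymMean p q F) (ha : a ∈ Set.Icc p q) (hx : x ∈ Set.Icc p q)
    (hax : a < x) : ∀ n k, k + 1 ≤ 2 ^ n → dyadic F a x n k < dyadic F a x n (k + 1) := by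
  intro n
  induction n with
  | zero =>
    intro k hk
    have : k = 0 := by simp at hk; omega
    subst this
    simpa [dyadic] using hax
  | succ n ih =>
    intro k hk
    have m := h.dyadic_mem ha hx n
    rw [pow_succ] at hk
    obtain ⟨k, rfl | rfl⟩ := Nat.even_or_odd' k
    · rw [dyadic_odd, h.dyadic_double ha hx]
      conv_lhs => rw [← h.idem _ (m k)]
      exact h.lt_right (m _) (m _) (m _) (ih k (by omega))
    · have e : 2 * k + 1 + 1 = 2 * (k + 1) := by ring
      rw [dyadic_odd, e, h.dyadic_double ha hx]
      conv_rhs => rw [← h.idem _ (m (k + 1))]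
      exact h.lt_left (m _) (m _) (m _) (ih k (by omega))

theorem dyadic_mono (h : BisymMean p q F) (ha : a ∈ Set.Icc p q) (hx : x ∈ Set.Icc p q)
    (hax : a < x) (n : ℕ) {i j : ℕ} (hij : i ≤ j) (hj : j ≤ 2 ^ n) :
    dyadic F a x n i ≤ dyadic F a x n j := by
  induction j, hij using Nat.le_induction with
  | base => exact le_rfl
  | succ j _ ih => exact (ih (by omega)).trans (h.dyadic_lt_succ ha hx hax n j hj).le

theorem dyadic_mono_level (h : BisymMean p q F) (ha : a ∈ Set.Icc p q) (hx : x ∈ Set.Icc p q)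
    (hax : a < x) {m n i j : ℕ} (hij : 2 ^ n * i ≤ 2 ^ m * j) (hj : j ≤ 2 ^ n) :
    dyadic F a x m i ≤ dyadic F a x n j := by
  rw [← h.dyadic_level ha hx m i n, ← h.dyadic_level ha hx n j m, add_comm n m]
  refine h.dyadic_mono ha hx hax _ hij ?_
  rw [pow_add]
  gcongr

/-- The dyadic points leave no gap: every interval `[X, Y]` inside `[a, x]` contains two
consecutive dyadic points of some level. -/
theorem exists_dyadic_between (h : BisymMean p q F) (ha : a ∈ Set.Icc p q)
    (hx : x ∈ Set.Icc p q) (hax : a < x) (hc : F a x = F x a) {X Y : ℝ} (hX : a ≤ X)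
    (hXY : X < Y) (hY : Y ≤ x) :
    ∃ n i, i + 1 ≤ 2 ^ n ∧ X ≤ dyadic F a x n i ∧ dyadic F a x n (i + 1) ≤ Y := by
  by_contra! hno
  have hXm : X ∈ Set.Icc p q := ⟨ha.1.trans hX, by linarith [hx.2]⟩
  have hYm : Y ∈ Set.Icc p q := ⟨by linarith [ha.1], hY.trans hx.2⟩
  have m := h.dyadic_mem ha hx
  have hgap : ∀ n, ∃ k l, k ≤ 2 ^ n ∧ l ≤ k + 2 ∧ l ≤ 2 ^ n ∧
      dyadic F a x n k ≤ X ∧ Y ≤ dyadic F a x n l := by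
    intro n
    classical
    have hex : ∃ k, k ≤ 2 ^ n ∧ X < dyadic F a x n k :=
      ⟨2 ^ n, le_rfl, by rw [h.dyadic_top ha hx]; linarith⟩
    obtain ⟨hk1, hk2⟩ := Nat.find_spec hex
    have hmin := fun k => Nat.find_min hex (m := k)
    generalize Nat.find hex = k at hk1 hk2 hmin
    have hk0 : k ≠ 0 := by
      rintro rfl
      rw [h.dyadic_zero ha hx] at hk2
      linarith
    obtain ⟨k, rfl⟩ := Nat.exists_eq_succ_of_ne_zero hk0
    have hk3 : dyadic F a x n k ≤ X := by
      have := hmin k (Nat.lt_succ_self k)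
      by_contra hcon
      exact this ⟨by omega, not_le.1 hcon⟩
    by_cases htop : k + 1 = 2 ^ n
    · refine ⟨k, k + 1, by omega, by omega, by omega, hk3, ?_⟩
      rw [htop, h.dyadic_top ha hx]
      exact hY
    · exact ⟨k, k + 2, by omega, le_rfl, by omega, hk3,
        (hno n (k + 1) (by omega) hk2.le).le⟩
  let φ : ℝ → ℝ := fun r => ⨆ n : ℕ, dyadic F a x n ⌊r * 2 ^ n⌋₊
  have hfl : ∀ r ∈ Set.Icc (0 : ℝ) 1, ∀ n, ((⌊r * 2 ^ n⌋₊ : ℕ) : ℝ) ≤ r * 2 ^ n := fun r hr n =>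
    Nat.floor_le (mul_nonneg hr.1 (by positivity))
  have hbdd : ∀ r : ℝ, BddAbove (Set.range fun n : ℕ => dyadic F a x n ⌊r * 2 ^ n⌋₊) := by
    rintro r
    refine ⟨q, ?_⟩
    rintro _ ⟨n, rfl⟩
    exact (m _ _).2
  have hφm : ∀ r, φ r ∈ Set.Icc p q := fun r =>
    ⟨(m 0 _).1.trans (le_ciSup (hbdd r) 0), ciSup_le fun n => (m _ _).2⟩
  have hφle : ∀ r ∈ Set.Icc (0 : ℝ) 1, ∀ n j : ℕ, j ≤ 2 ^ n → r * 2 ^ n ≤ j →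
      φ r ≤ dyadic F a x n j := by
    intro r hr n j hj hrj
    refine ciSup_le fun k => h.dyadic_mono_level ha hx hax ?_ hj
    have h1 := hfl r hr k
    have h2 : (2 : ℝ) ^ n * ⌊r * 2 ^ k⌋₊ ≤ 2 ^ k * j := by
      calc (2 : ℝ) ^ n * ⌊r * 2 ^ k⌋₊ ≤ 2 ^ n * (r * 2 ^ k) := by gcongr
        _ = 2 ^ k * (r * 2 ^ n) := by ring
        _ ≤ 2 ^ k * j := by gcongr
    exact_mod_cast h2
  have hleφ : ∀ r ∈ Set.Icc (0 : ℝ) 1, ∀ n j : ℕ, (j : ℝ) ≤ r * 2 ^ n →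
      dyadic F a x n j ≤ φ r := by
    intro r hr n j hj
    refine le_trans ?_ (le_ciSup (hbdd r) n)
    refine h.dyadic_mono ha hx hax n (Nat.le_floor hj) ?_
    have h1 := hfl r hr n
    have h2 : ((⌊r * 2 ^ n⌋₊ : ℕ) : ℝ) ≤ 2 ^ n :=
      h1.trans (mul_le_of_le_one_left (by positivity) hr.2)
    exact_mod_cast h2
  have hdisj : ∀ r ∈ Set.Icc (0 : ℝ) 1, ∀ r' ∈ Set.Icc (0 : ℝ) 1, r < r' →
      F Y (φ r) ≤ F X (φ r') := by
    intro r hr r' hr' hlt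
    -- At this level `r` and `r'` are more than three steps apart, which leaves room for an
    -- index `j` with `r ≤ j / 2^n` and `(j + 2) / 2^n ≤ r'`.
    obtain ⟨n, hn⟩ := pow_unbounded_of_one_lt (3 / (r' - r)) (one_lt_two : (1 : ℝ) < 2)
    rw [div_lt_iff₀ (by linarith)] at hn
    obtain ⟨k, l, hk, hlk, hl, hkX, hYl⟩ := hgap n
    set j := ⌈r * 2 ^ n⌉₊ with hj
    have hj1 : r * 2 ^ n ≤ j := Nat.le_ceil _
    have hj2 : (j : ℝ) < r * 2 ^ n + 1 := Nat.ceil_lt_add_one (mul_nonneg hr.1 (by positivity))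
    have hj3 : ((j + 2 : ℕ) : ℝ) ≤ r' * 2 ^ n := by push_cast; nlinarith
    have hj4 : j + 2 ≤ 2 ^ n := by
      have : ((j + 2 : ℕ) : ℝ) ≤ 2 ^ n :=
        hj3.trans (mul_le_of_le_one_left (by positivity) hr'.2)
      exact_mod_cast this
    calc F Y (φ r) ≤ F (dyadic F a x n l) (dyadic F a x n j) :=
          h.mono hYm (m _ _) (hφm r) (m _ _) hYl (hφle r hr n j (by omega) hj1)
      _ = dyadic F a x (n + 1) (l + j) := h.dyadic_mul ha hx hc n l j hl (by omega)
      _ ≤ dyadic F a x (n + 1) (k + (j + 2)) :=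
          h.dyadic_mono ha hx hax _ (by omega) (by rw [pow_succ]; omega)
      _ = F (dyadic F a x n k) (dyadic F a x n (j + 2)) :=
          (h.dyadic_mul ha hx hc n k (j + 2) hk hj4).symm
      _ ≤ F X (φ r') :=
          h.mono (m _ _) hXm (m _ _) (hφm r') hkX (hleφ r' hr' n _ hj3)
  have hcount : (Set.Icc (0 : ℝ) 1).Countable := by
    refine Set.PairwiseDisjoint.countable_of_isOpen
      (s := fun r => Set.Ioo (F X (φ r)) (F Y (φ r))) ?_ (fun _ _ => isOpen_Ioo)
      (fun r _ => Set.nonempty_Ioo.2 (h.lt_left hXm hYm (hφm r) hXY))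
    intro r hr r' hr' hne
    rw [Function.onFun, Set.disjoint_left]
    rintro z ⟨h1, h2⟩ ⟨h3, h4⟩
    rcases lt_or_gt_of_ne hne with hlt | hlt
    · linarith [hdisj r hr r' hr' hlt]
    · linarith [hdisj r' hr' r hr hlt]
  have := hcount.measure_zero MeasureTheory.volume
  simp at this

end Dyadic

theorem comm_not_lt (h : BisymMean p q F) {a b : ℝ} (ha : a ∈ Set.Icc p q)
    (hb : b ∈ Set.Icc p q) (hab : a < b)
    (H : ∀ z < b, ∃ u, z < u ∧ u < b ∧ F a u = F u a) : ¬ F a b < F b a := by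
  intro hlt
  have mem : ∀ {u}, a ≤ u → u ≤ b → u ∈ Set.Icc p q := fun h1 h2 =>
    ⟨ha.1.trans h1, h2.trans hb.2⟩
  let S : Set ℝ := {y | ∃ u, a < u ∧ u < b ∧ F a u = F u a ∧ y = F u a}
  have hSub : ∀ y ∈ S, y ≤ F a b := by
    rintro _ ⟨u, h1, h2, h3, rfl⟩
    rw [← h3]
    exact (h.lt_right ha (mem h1.le h2.le) hb h2).le
  have hSbdd : BddAbove S := ⟨_, hSub⟩
  have hS : ∀ u, a < u → u < b → F a u = F u a → F u a ≤ sSup S := fun u h1 h2 h3 =>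
    le_csSup hSbdd ⟨u, h1, h2, h3, rfl⟩
  obtain ⟨u₀, hu1, hu2, hu3⟩ := H a hab
  have hne : S.Nonempty := ⟨_, u₀, hu1, hu2, hu3, rfl⟩
  have hs2 : sSup S ≤ F a b := csSup_le hne hSub
  have hs1 : a < sSup S := by
    have h1 := h.lt_left ha (mem hu1.le hu2.le) ha hu1
    rw [h.idem a ha] at h1
    exact h1.trans_le (hS u₀ hu1 hu2 hu3)
  have hcb : F b a < b := by
    have := h.lt_right hb ha hb hab
    rwa [h.idem b hb] at this
  have hcm : F b a ∈ Set.Icc p q := h.map b hb a ha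
  -- `c (u a) ≤ s`, where `c = F b a` and `s = sSup S`.
  have hkey : ∀ u, a < u → u < b → F (F b a) (F u a) ≤ sSup S := by
    intro u h1 h2
    have hu := mem h1.le h2.le
    rw [h.bisym b hb a ha u hu a ha, h.idem a ha]
    have hbu : F b u < b := by
      have := h.lt_right hb hu hb h2
      rwa [h.idem b hb] at this
    obtain ⟨z, hz1, hz2, hz3⟩ := H (max a (F b u)) (max_lt hab hbu)
    obtain ⟨hz1, hz1'⟩ := max_lt_iff.1 hz1
    exact (h.lt_left (h.map b hb u hu) (mem hz1.le hz2.le) ha hz1').le.trans (hS z hz1 hz2 hz3)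
  obtain ⟨x, hx1, hx2, hx3⟩ := H (F b a) hcb
  have hax : a < x := by linarith
  have hx := mem hax.le hx2.le
  have m := h.dyadic_mem ha hx
  obtain ⟨n, i, hi, hXi, hiY⟩ := h.exists_dyadic_between ha hx hax hx3 hs1.le
    (hs2.trans_lt hlt) hx1.le
  -- The dyadic points `k` and `k + 1` of level `n` enclose `s`, and `k + 2` still lies below `c`.
  obtain ⟨k, hki, hk1, hk2⟩ : ∃ k, k + 1 ≤ i ∧ dyadic F a x n k < sSup S ∧
      sSup S ≤ dyadic F a x n (k + 1) := by
    classical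
    have hex : ∃ k, sSup S ≤ dyadic F a x n k := ⟨i, hXi⟩
    have hle : Nat.find hex ≤ i := Nat.find_min' hex hXi
    have hsp := Nat.find_spec hex
    have hmin := fun k => Nat.find_min hex (m := k)
    generalize Nat.find hex = k at hle hsp hmin
    have hk0 : k ≠ 0 := by
      rintro rfl
      rw [h.dyadic_zero ha hx] at hsp
      linarith
    obtain ⟨k, rfl⟩ := Nat.exists_eq_succ_of_ne_zero hk0
    exact ⟨k, hle, not_le.1 (hmin k (Nat.lt_succ_self k)), hsp⟩
  obtain ⟨_, ⟨u, h1, h2, h3, rfl⟩, heu⟩ := exists_lt_of_lt_csSup hne hk1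
  have hum : F u a ∈ Set.Icc p q := h.map u (mem h1.le h2.le) a ha
  have hd : dyadic F a x n (k + 2) ≤ F b a :=
    (h.dyadic_mono ha hx hax n (by omega) hi).trans hiY
  have hprod : F (dyadic F a x n (k + 2)) (dyadic F a x n k) = dyadic F a x n (k + 1) := by
    rw [h.dyadic_mul ha hx hx3 n (k + 2) k (by omega) (by omega), ← h.dyadic_double ha hx n (k + 1)]
    congr 1
    ring
  have h4 : dyadic F a x n (k + 1) ≤ F (F b a) (dyadic F a x n k) := by
    rw [← hprod]
    exact h.mono (m _ _) hcm (m _ _) (m _ _) hd le_rfl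
  have h5 := h.lt_right hcm (m n k) hum heu
  linarith [hkey u h1 h2]

theorem sSup_comm (h : BisymMean p q F) {a : ℝ} (ha : a ∈ Set.Icc p q) :
    sSup {x ∈ Set.Icc p q | F a x = F x a} ∈ {x ∈ Set.Icc p q | F a x = F x a} := by
  set A := {x ∈ Set.Icc p q | F a x = F x a} with hA
  have haA : a ∈ A := ⟨ha, rfl⟩
  have hbdd : BddAbove A := ⟨q, fun x hx => hx.1.2⟩
  have hab : a ≤ sSup A := le_csSup hbdd haA
  have hb : sSup A ∈ Set.Icc p q := ⟨ha.1.trans hab, csSup_le ⟨a, haA⟩ fun x hx => hx.1.2⟩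
  by_contra hcon
  have hne : a < sSup A := lt_of_le_of_ne hab fun e => hcon (e ▸ haA)
  have H : ∀ z < sSup A, ∃ u, z < u ∧ u < sSup A ∧ F a u = F u a := by
    intro z hz
    obtain ⟨u, hu, hzu⟩ := exists_lt_of_lt_csSup ⟨a, haA⟩ hz
    exact ⟨u, hzu, lt_of_le_of_ne (le_csSup hbdd hu) fun e => hcon (e ▸ hu), hu.2⟩
  have h1 := h.comm_not_lt ha hb hne H
  have h2 := h.swap.comm_not_lt ha hb hne fun z hz => by
    obtain ⟨u, h1, h2, h3⟩ := H z hz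
    exact ⟨u, h1, h2, h3.symm⟩
  exact hcon ⟨hb, le_antisymm (not_lt.1 h2) (not_lt.1 h1)⟩

end BisymMean

/-- On a compact proper interval, each equivalence class of the relation
a ∼ b ⟺ F(a,b)=F(b,a) is a closed interval (it contains its infimum and supremum). -/
theorem stmt_18 (p q : ℝ) (hpq : p < q) (F : ℝ → ℝ → ℝ)
    (hmap : ∀ x ∈ Set.Icc p q, ∀ y ∈ Set.Icc p q, F x y ∈ Set.Icc p q)
    (hrefl : ∀ x ∈ Set.Icc p q, F x x = x)
    (hinc1 : ∀ y₀ ∈ Set.Icc p q, StrictMonoOn (fun x => F x y₀) (Set.Icc p q))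
    (hinc2 : ∀ x₀ ∈ Set.Icc p q, StrictMonoOn (fun y => F x₀ y) (Set.Icc p q))
    (hbisym : ∀ x ∈ Set.Icc p q, ∀ y ∈ Set.Icc p q, ∀ u ∈ Set.Icc p q,
      ∀ v ∈ Set.Icc p q, F (F x y) (F u v) = F (F x u) (F y v))
    (A : Set ℝ)
    (hA : ∃ a₀ ∈ Set.Icc p q, A = {x ∈ Set.Icc p q | F a₀ x = F x a₀}) :
    sInf A ∈ A ∧ sSup A ∈ A := by
  obtain ⟨a, ha, rfl⟩ := hA
  have h : BisymMean p q F := ⟨hmap, hrefl, hinc1, hinc2, hbisym⟩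
  refine ⟨?_, h.sSup_comm ha⟩
  have hn := h.neg.sSup_comm (a := -a) ⟨neg_le_neg ha.2, neg_le_neg ha.1⟩
  have e : {x ∈ Set.Icc (-q) (-p) | -F (- -a) (-x) = -F (-x) (- -a)}
      = -{x ∈ Set.Icc p q | F a x = F x a} := by
    ext x
    simp only [neg_neg, neg_inj, Set.mem_neg, Set.mem_ofPred_eq, Set.mem_Icc]
    constructor
    · rintro ⟨⟨h1, h2⟩, h3⟩
      exact ⟨⟨by linarith, by linarith⟩, h3⟩
    · rintro ⟨⟨h1, h2⟩, h3⟩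
      exact ⟨⟨by linarith, by linarith⟩, h3⟩
  rw [e, Real.sSup_neg, Set.mem_neg, neg_neg] at hn
  exact hn
end
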